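/- arXiv:1512.03732 — 5 statements merged into one kernel-verified Lean document; each statement's English description precedes it below -/
import Mathlib

section
/- There exist constants A > 5 and B > 1 such that for every k ∈ ℕ and every natural number n > 2k one has Σ_{j∈ℕ, j≤k, j ≤ 5k²/n} a_{k,j}·binom(n, k−j) ≤ Q_k(n) ≤ B·Σ_{j∈ℕ, j≤k, j ≤ A·k²/n} a_{k,j}·binom(n, k−j). -/
open Finset

noncomputable section

/-- The generating set `S = {(1,0),(-1,0),(0,1),(0,-1)}` of ℤ². -/
def Sfin : Finset (ℤ × ℤ) := {(1,0), (-1,0), (0,1), (0,-1)}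

/-- `Q u n = E |u(S_n)|²` for the simple random walk on ℤ² started at 0. -/
noncomputable def Q (u : ℤ × ℤ → ℂ) (n : ℕ) : ℝ :=
  (4 : ℝ)⁻¹ ^ n * ∑ s ∈ Fintype.piFinset (fun _ : Fin n => Sfin), ‖u (∑ i, s i)‖ ^ 2

/-- Generalized binomial coefficient `binom(x,k) = (1/k!)·∏_{j<k}(x-j)`. -/
noncomputable def gbinom (x : ℝ) (k : ℕ) : ℝ :=
  (∏ j ∈ Finset.range k, (x - j)) / (Nat.factorial k)

/-- `F_k(x) = binom(x + (k-1)/2, k)`, a discretization of `x^k/k!`. -/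
noncomputable def F (k : ℕ) (x : ℝ) : ℝ := gbinom (x + ((k : ℝ) - 1) / 2) k

/-- `Z_k(x,y) = Σ_{l=0}^k i^l F_{k-l}(x) F_l(y)`, a harmonic discretization of `z^k/k!`. -/
noncomputable def Z (k : ℕ) (x y : ℝ) : ℂ :=
  ∑ l ∈ Finset.range (k + 1), Complex.I ^ l * (F (k - l) x : ℂ) * (F l y : ℂ)

/-- `Q_k := Q_{Z_k}` (with `Z_k` restricted to ℤ²). -/
noncomputable def Qk (k : ℕ) (n : ℕ) : ℝ := Q (fun p => Z k p.1 p.2) n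

/-- Forward difference operator: `fwd f n = f (n+1) - f n`. -/
def fwd (f : ℕ → ℝ) : ℕ → ℝ := fun n => f (n + 1) - f n

/-- Newton coefficients `a_{k,j} = Q_k^{(k-j)}(0)`. -/
noncomputable def a (k j : ℕ) : ℝ := fwd^[k - j] (Qk k) 0

/-!
The generating series `∑ F_k(x) t^k` satisfies a second order recursion in `x`, so passing to a
neighbouring lattice point multiplies `∑ Z_k(x, y) t^k` by an explicit power series. Averaging
`|·|²` over the four neighbours therefore gives `Q_k(n) = ((1 + G)^n β_k)(1, 1)`, where `G` acts on
bilinear forms on `ℝ⟦t⟧`, preserves positive semidefiniteness, and `β_k` has rank one. The Newton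
coefficients are the values `(G^m β_k)(1, 1)`: they are nonnegative, which gives the lower bound.

For the upper bound, by Markov's inequality it suffices that the Newton terms `w_j` satisfy
`∑ j w_j = O(k² / n) ∑ w_j`. Since `β_k` reads off a coefficient at `t^k`, a twisted Euler operator
acts on it as `k`, and the commutator of that operator with `G` agrees with `G` up to terms that
contain four factors of `t`; this expresses `∑ j w_j` through such terms. In the seminorm of the
form at time `n` each factor of `t` contributes `O(√(k / n))`.
-/

section SeriesIdentities

open PowerSeries

/-- The coefficients of `(1 + ε X² / 4)^(-1/2)`, through the recursion that the differential
equation of this series imposes. -/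
def invSqrtCoeff (ε : ℝ) : ℕ → ℝ
  | 0 => 1
  | 1 => 0
  | j + 2 => -(ε * (j + 1)) / (4 * (j + 2)) * invSqrtCoeff ε j

/-- The power series `(1 + ε X² / 4)^(-1/2)`. -/
def invSqrt (ε : ℝ) : ℝ⟦X⟧ := mk (invSqrtCoeff ε)

/-- The quadratic factor `1 + ε X² / 4`. -/
def quadFactor (ε : ℝ) : ℝ⟦X⟧ := 1 + (ε / 4) • X ^ 2

/-- The power series `(1 + ε X² / 4)^(1/2)`. -/
def sqrtSeries (ε : ℝ) : ℝ⟦X⟧ := quadFactor ε * invSqrt ε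

/-- The Euler operator `f ↦ X f'`. -/
def euler : Derivation ℝ ℝ⟦X⟧ ℝ⟦X⟧ := (X : ℝ⟦X⟧) • d⁄dX ℝ

lemma euler_apply (f : ℝ⟦X⟧) : euler f = X * d⁄dX ℝ f := rfl

lemma coeff_euler (k : ℕ) (f : ℝ⟦X⟧) : coeff k (euler f) = k * coeff k f := by
  rw [euler_apply]
  cases k with
  | zero => simp
  | succ k => rw [coeff_succ_X_mul, coeff_derivative]; push_cast; ring

lemma coeff_add_two_quadFactor_mul (ε : ℝ) (f : ℝ⟦X⟧) (j : ℕ) :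
    coeff (j + 2) (quadFactor ε * f) = coeff (j + 2) f + ε / 4 * coeff j f := by
  rw [quadFactor, add_mul, one_mul, smul_mul_assoc, map_add, coeff_smul, coeff_X_pow_mul,
    smul_eq_mul]

lemma coeff_quadFactor_mul_of_lt {j : ℕ} (hj : j < 2) (ε : ℝ) (f : ℝ⟦X⟧) :
    coeff j (quadFactor ε * f) = coeff j f := by
  rw [quadFactor, add_mul, one_mul, smul_mul_assoc, map_add, coeff_smul, coeff_X_pow_mul',
    if_neg (by omega), smul_zero, add_zero]

lemma abs_invSqrtCoeff_le {ε : ℝ} (hε : |ε| ≤ 1) : ∀ j, |invSqrtCoeff ε j| ≤ (1 / 2) ^ j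
  | 0 => by simp [invSqrtCoeff]
  | 1 => by simp [invSqrtCoeff]
  | j + 2 => by
    have hfactor : |-(ε * (j + 1)) / (4 * (j + 2))| ≤ (1 / 2) ^ 2 := by
      rw [abs_div, abs_neg, abs_mul, abs_of_pos (by positivity : (0 : ℝ) < j + 1),
        abs_of_pos (by positivity : (0 : ℝ) < 4 * (j + 2)), div_le_iff₀ (by positivity)]
      nlinarith [mul_le_mul_of_nonneg_right hε (by positivity : (0 : ℝ) ≤ j + 1)]
    rw [invSqrtCoeff, abs_mul, pow_add, mul_comm]
    exact mul_le_mul (abs_invSqrtCoeff_le hε j) hfactor (abs_nonneg _) (by positivity)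

lemma abs_coeff_invSqrt_le {ε : ℝ} (hε : |ε| ≤ 1) (j : ℕ) :
    |coeff j (invSqrt ε)| ≤ (1 / 2) ^ j := by
  rw [invSqrt, coeff_mk]
  exact abs_invSqrtCoeff_le hε j

lemma quadFactor_mul_deriv_invSqrt (ε : ℝ) :
    quadFactor ε * d⁄dX ℝ (invSqrt ε) = -((ε / 4) • (X * invSqrt ε)) := by
  ext j
  match j with
  | 0 => simp [coeff_quadFactor_mul_of_lt, coeff_derivative, invSqrt, invSqrtCoeff]
  | 1 =>
    rw [coeff_quadFactor_mul_of_lt one_lt_two, coeff_derivative, map_neg, coeff_smul,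
      coeff_succ_X_mul]
    simp [invSqrt, invSqrtCoeff]
    ring
  | j + 2 =>
    rw [coeff_add_two_quadFactor_mul, coeff_derivative, coeff_derivative, map_neg, coeff_smul,
      coeff_succ_X_mul]
    simp only [invSqrt, coeff_mk, invSqrtCoeff, smul_eq_mul]
    push_cast
    field_simp
    ring

lemma deriv_quadFactor (ε : ℝ) : d⁄dX ℝ (quadFactor ε) = (ε / 2) • X := by
  rw [quadFactor, map_add, Derivation.map_one_eq_zero, Derivation.map_smul,
    Derivation.leibniz_pow, derivative_X]
  simp only [smul_eq_mul, Nat.add_one_sub_one, pow_one, mul_one, zero_add]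
  algebra

lemma quadFactor_mul_invSqrt_sq (ε : ℝ) : quadFactor ε * invSqrt ε ^ 2 = 1 := by
  apply derivative.ext
  · rw [Derivation.leibniz, Derivation.leibniz_pow, deriv_quadFactor,
      Derivation.map_one_eq_zero]
    simp only [smul_eq_mul, Nat.add_one_sub_one, pow_one]
    linear_combination (norm := algebra) (2 * invSqrt ε) * quadFactor_mul_deriv_invSqrt ε
  · simp [quadFactor, invSqrt, invSqrtCoeff]

lemma sqrtSeries_mul_invSqrt (ε : ℝ) : sqrtSeries ε * invSqrt ε = 1 := by
  rw [sqrtSeries, mul_assoc, ← sq, quadFactor_mul_invSqrt_sq]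

lemma sqrtSeries_sq (ε : ℝ) : sqrtSeries ε ^ 2 = quadFactor ε := by
  rw [sqrtSeries]
  linear_combination quadFactor ε * quadFactor_mul_invSqrt_sq ε

lemma deriv_sqrtSeries (ε : ℝ) : d⁄dX ℝ (sqrtSeries ε) = (ε / 4) • (X * invSqrt ε) := by
  rw [sqrtSeries, Derivation.leibniz, deriv_quadFactor]
  simp only [smul_eq_mul]
  linear_combination (norm := algebra) quadFactor_mul_deriv_invSqrt ε

lemma euler_X_sq : euler (X ^ 2) = (2 : ℝ) • X ^ 2 := by
  rw [euler_apply, Derivation.leibniz_pow, derivative_X]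
  simp only [smul_eq_mul, Nat.add_one_sub_one, pow_one, mul_one]
  algebra

lemma euler_X_mul_sqrtSeries (ε : ℝ) :
    euler (X * sqrtSeries ε) = X * sqrtSeries ε + (ε / 4) • (X ^ 3 * invSqrt ε) := by
  rw [euler_apply, Derivation.leibniz, deriv_sqrtSeries, derivative_X]
  simp only [smul_eq_mul]
  algebra

lemma coeff_zero_sqrtSeries (ε : ℝ) : coeff 0 (sqrtSeries ε) = 1 := by
  rw [sqrtSeries, coeff_quadFactor_mul_of_lt two_pos, invSqrt, coeff_mk, invSqrtCoeff]

lemma coeff_one_sqrtSeries (ε : ℝ) : coeff 1 (sqrtSeries ε) = 0 := by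
  rw [sqrtSeries, coeff_quadFactor_mul_of_lt one_lt_two, invSqrt, coeff_mk, invSqrtCoeff]

lemma coeff_add_two_sqrtSeries (ε : ℝ) (j : ℕ) :
    coeff (j + 2) (sqrtSeries ε) = ε * invSqrtCoeff ε j / (4 * (j + 2)) := by
  simp only [sqrtSeries, coeff_add_two_quadFactor_mul, invSqrt, coeff_mk, invSqrtCoeff]
  field_simp
  ring

lemma abs_coeff_add_two_sqrtSeries_le {ε : ℝ} (hε : |ε| ≤ 1) (j : ℕ) :
    |coeff (j + 2) (sqrtSeries ε)| ≤ (1 / 2) ^ j / (4 * (j + 2)) := by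
  rw [coeff_add_two_sqrtSeries, abs_div, abs_mul,
    abs_of_pos (by positivity : (0 : ℝ) < 4 * (j + 2))]
  gcongr
  simpa using mul_le_mul hε (abs_invSqrtCoeff_le hε j) (abs_nonneg _) zero_le_one

lemma abs_coeff_sqrtSeries_le {ε : ℝ} (hε : |ε| ≤ 1) :
    ∀ j, |coeff j (sqrtSeries ε)| ≤ (1 / 2) ^ j
  | 0 => by simp [coeff_zero_sqrtSeries]
  | 1 => by simp [coeff_one_sqrtSeries]
  | j + 2 => by
    calc |coeff (j + 2) (sqrtSeries ε)| ≤ (1 / 2) ^ j / (4 * (j + 2)) :=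
          abs_coeff_add_two_sqrtSeries_le hε j
      _ ≤ (1 / 2) ^ j / 2 ^ 2 := by gcongr; linarith [(Nat.cast_nonneg j : (0 : ℝ) ≤ j)]
      _ = (1 / 2) ^ (j + 2) := by rw [pow_add, div_eq_mul_inv]; norm_num

/-- The average of `(1 + X² / 4)^(1/2)` and `(1 - X² / 4)^(1/2)`. -/
def sqrtMean : ℝ⟦X⟧ := (1 / 2 : ℝ) • (sqrtSeries 1 + sqrtSeries (-1))

lemma coeff_sqrtMean (j : ℕ) :
    coeff j sqrtMean = 1 / 2 * (coeff j (sqrtSeries 1) + coeff j (sqrtSeries (-1))) := by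
  rw [sqrtMean, coeff_smul, map_add, smul_eq_mul]

lemma exists_sqrtMean_eq_one_add : ∃ f : ℝ⟦X⟧, sqrtMean = 1 + X ^ 4 * f ∧
    ∀ j, |coeff j f| ≤ 1 / 64 * (1 / 2) ^ j := by
  refine ⟨mk fun j => coeff (j + 4) sqrtMean, ?_, fun j => ?_⟩
  · ext j
    rw [map_add, coeff_X_pow_mul', coeff_mk, coeff_one]
    match j with
    | 0 => norm_num [coeff_sqrtMean, coeff_zero_sqrtSeries]
    | 1 => norm_num [coeff_sqrtMean, coeff_one_sqrtSeries]
    | 2 => norm_num [coeff_sqrtMean, coeff_add_two_sqrtSeries 1 0,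
        coeff_add_two_sqrtSeries (-1) 0, invSqrtCoeff]
    | 3 => norm_num [coeff_sqrtMean, coeff_add_two_sqrtSeries 1 1,
        coeff_add_two_sqrtSeries (-1) 1, invSqrtCoeff]
    | j + 4 => simp
  · have hcoeff (ε : ℝ) (hε : |ε| ≤ 1) :
        |coeff (j + 4) (sqrtSeries ε)| ≤ 1 / 64 * (1 / 2) ^ j :=
      calc |coeff (j + 4) (sqrtSeries ε)|
          ≤ (1 / 2) ^ (j + 2) / (4 * ((j + 2 : ℕ) + 2)) :=
            abs_coeff_add_two_sqrtSeries_le hε (j + 2)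
        _ ≤ (1 / 2) ^ (j + 2) / 16 := by
            gcongr
            push_cast
            linarith [(Nat.cast_nonneg j : (0 : ℝ) ≤ j)]
        _ = 1 / 64 * (1 / 2) ^ j := by ring
    rw [coeff_mk, coeff_sqrtMean, abs_mul, abs_of_pos one_half_pos]
    linarith [abs_add_le (coeff (j + 4) (sqrtSeries 1)) (coeff (j + 4) (sqrtSeries (-1))),
      hcoeff 1 (by simp), hcoeff (-1) (by simp)]

/-- The power series `(1 - X⁴ / 16)^(-1/2)`, as the product of `(1 ± X² / 4)^(-1/2)`. -/
def invSqrtProd : ℝ⟦X⟧ := invSqrt 1 * invSqrt (-1)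

lemma one_sub_mul_invSqrtProd_sq : (1 - (1 / 16 : ℝ) • X ^ 4) * invSqrtProd ^ 2 = 1 := by
  have hfactor : (1 - (1 / 16 : ℝ) • X ^ 4 : ℝ⟦X⟧) = quadFactor 1 * quadFactor (-1) := by
    rw [quadFactor, quadFactor]
    algebra
  rw [hfactor, invSqrtProd]
  linear_combination quadFactor (-1) * invSqrt (-1) ^ 2 * quadFactor_mul_invSqrt_sq 1
    + quadFactor_mul_invSqrt_sq (-1)

lemma abs_coeff_le_pow_of_one_sub_smul_X_pow_mul_eq_one {c r : ℝ} {m : ℕ} (hm : 0 < m)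
    (hr : 0 ≤ r) (hc : |c| ≤ r ^ m) {f : ℝ⟦X⟧} (hf : (1 - c • X ^ m) * f = 1) (j : ℕ) :
    |coeff j f| ≤ r ^ j := by
  induction j using Nat.strong_induction_on with
  | _ j ih =>
    have hrec : coeff j f = coeff j (1 : ℝ⟦X⟧) + c * coeff j (X ^ m * f) := by
      conv_lhs => rw [show f = 1 + c • (X ^ m * f) by rw [← hf]; algebra]
      rw [map_add, coeff_smul, smul_eq_mul]
    rw [hrec, coeff_X_pow_mul', coeff_one]
    rcases Nat.eq_zero_or_pos j with rfl | hj
    · simp [hm.ne']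
    rw [if_neg hj.ne', zero_add]
    split_ifs with hmj
    · rw [abs_mul, ← Nat.add_sub_cancel' hmj, pow_add, Nat.add_sub_cancel_left]
      exact mul_le_mul hc (ih _ (by omega)) (abs_nonneg _) (by positivity)
    · simpa using pow_nonneg hr j

lemma abs_coeff_invSqrtProd_sq_le (j : ℕ) : |coeff j (invSqrtProd ^ 2)| ≤ (1 / 2) ^ j :=
  abs_coeff_le_pow_of_one_sub_smul_X_pow_mul_eq_one (by norm_num) (by norm_num) (by norm_num)
    one_sub_mul_invSqrtProd_sq j

lemma euler_invSqrt (ε : ℝ) : euler (invSqrt ε) = -((ε / 4) • (X ^ 2 * invSqrt ε ^ 3)) := by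
  rw [euler_apply]
  linear_combination (norm := algebra) X * invSqrt ε ^ 2 * quadFactor_mul_deriv_invSqrt ε
    - X * d⁄dX ℝ (invSqrt ε) * quadFactor_mul_invSqrt_sq ε

/-- The logarithmic derivative `euler invSqrtProd / invSqrtProd`. -/
def logDerivInvSqrtProd : ℝ⟦X⟧ := (1 / 8 : ℝ) • (X ^ 4 * invSqrtProd ^ 2)

lemma euler_invSqrtProd : euler invSqrtProd = logDerivInvSqrtProd * invSqrtProd := by
  have h₁ := quadFactor_mul_invSqrt_sq 1
  have h₂ := quadFactor_mul_invSqrt_sq (-1)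
  rw [quadFactor] at h₁ h₂
  rw [logDerivInvSqrtProd, invSqrtProd, Derivation.leibniz, euler_invSqrt, euler_invSqrt]
  simp only [smul_eq_mul]
  linear_combination (norm := algebra) (1 / 4 : ℝ) • (X ^ 2 * invSqrt 1 * invSqrt (-1)) *
    (invSqrt 1 ^ 2 * h₂ - invSqrt (-1) ^ 2 * h₁)

end SeriesIdentities

open LinearMap (BilinForm)

section PosSemidefForms

variable {M : Type*} [AddCommGroup M] [Module ℝ M] {β : BilinForm ℝ M}

lemma abs_apply_le_sqrt_mul_sqrt (hβ : β.IsPosSemidef) (f g : M) :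
    |β f g| ≤ √(β f f) * √(β g g) := by
  rw [← Real.sqrt_mul (hβ.isNonneg.nonneg f)]
  exact Real.abs_le_sqrt
    (β.apply_sq_le_of_symm hβ.isNonneg.nonneg (BilinForm.isSymm_iff.mp hβ.isSymm) f g)

/-- The seminorm `f ↦ √(β f f)` of a positive semidefinite form `β`. -/
def formSeminorm (β : BilinForm ℝ M) (hβ : β.IsPosSemidef) : Seminorm ℝ M :=
  Seminorm.of (fun f => √(β f f))
    (fun f g => Real.sqrt_le_iff.mpr ⟨by positivity, by
      have hcs := le_of_abs_le (abs_apply_le_sqrt_mul_sqrt hβ f g)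
      simp only [map_add, LinearMap.add_apply, hβ.isSymm.eq g f]
      linarith [Real.sq_sqrt (hβ.isNonneg.nonneg f), Real.sq_sqrt (hβ.isNonneg.nonneg g)]⟩)
    (fun c f => by
      rw [map_smul, map_smul, LinearMap.smul_apply, smul_eq_mul, smul_eq_mul, ← mul_assoc,
        Real.sqrt_mul (mul_self_nonneg c), Real.sqrt_mul_self_eq_abs, Real.norm_eq_abs])

lemma formSeminorm_sq (hβ : β.IsPosSemidef) (f : M) : formSeminorm β hβ f ^ 2 = β f f :=
  Real.sq_sqrt (hβ.isNonneg.nonneg f)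

lemma abs_apply_le_formSeminorm_mul (hβ : β.IsPosSemidef) (f g : M) :
    |β f g| ≤ formSeminorm β hβ f * formSeminorm β hβ g :=
  abs_apply_le_sqrt_mul_sqrt hβ f g

lemma seminorm_half_smul_add_sq_le (p : Seminorm ℝ M) (u v : M) :
    p ((1 / 2 : ℝ) • (u + v)) ^ 2 ≤ 1 / 2 * (p u ^ 2 + p v ^ 2) := by
  have hle : p ((1 / 2 : ℝ) • (u + v)) ≤ 1 / 2 * (p u + p v) := by
    rw [map_smul_eq_mul, Real.norm_of_nonneg one_half_pos.le]
    gcongr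
    exact map_add_le_add p u v
  calc p ((1 / 2 : ℝ) • (u + v)) ^ 2 ≤ (1 / 2 * (p u + p v)) ^ 2 :=
        pow_le_pow_left₀ (apply_nonneg p _) hle 2
    _ ≤ 1 / 2 * (p u ^ 2 + p v ^ 2) := by linarith [sq_nonneg (p u - p v)]

end PosSemidefForms

section MulPullback

variable {R S : Type*} [CommRing R] [CommRing S] [Algebra R S]

/-- The operator taking a bilinear form `β` on an algebra to the form
`(f, g) ↦ β (u * f) (v * g)`. -/
def mulPullback (u v : S) : Module.End R (BilinForm R S) where
  toFun β := β.compl₁₂ (LinearMap.mulLeft R u) (LinearMap.mulLeft R v)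
  map_add' _ _ := rfl
  map_smul' _ _ := rfl

lemma mulPullback_apply (u v : S) (β : BilinForm R S) (f g : S) :
    mulPullback u v β f g = β (u * f) (v * g) := rfl

lemma commute_mulPullback (u v u' v' : S) :
    Commute (mulPullback (R := R) u v) (mulPullback u' v') := by
  refine LinearMap.ext fun β => LinearMap.ext₂ fun f g => ?_
  simp only [Module.End.mul_apply, mulPullback_apply, mul_left_comm]

lemma isPosSemidef_mulPullback {A : Type*} [CommRing A] [Algebra ℝ A] {β : BilinForm ℝ A}
    (hβ : β.IsPosSemidef) (u : A) : (mulPullback u u β).IsPosSemidef where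
  eq f g := hβ.isSymm.eq (u * f) (u * g)
  nonneg f := hβ.isNonneg.nonneg (u * f)

/-- The operator taking a bilinear form `β` on an algebra to the form
`(f, g) ↦ β (D f + c * f) g`, for a derivation `D`. -/
def leftTwist (D : Derivation R S S) (c : S) : Module.End R (BilinForm R S) where
  toFun β := β.comp (D.toLinearMap + LinearMap.mulLeft R c) LinearMap.id
  map_add' _ _ := rfl
  map_smul' _ _ := rfl

lemma leftTwist_apply (D : Derivation R S S) (c : S) (β : BilinForm R S) (f g : S) :
    leftTwist D c β f g = β (D f + c * f) g := rfl

lemma mulPullback_mul_leftTwist (u v : S) (D : Derivation R S S) (c : S) :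
    mulPullback (R := R) u v * leftTwist D c =
      leftTwist D c * mulPullback u v + mulPullback (D u) v := by
  refine LinearMap.ext fun β => LinearMap.ext₂ fun f g => ?_
  simp only [Module.End.mul_apply, LinearMap.add_apply, mulPullback_apply, leftTwist_apply]
  rw [← LinearMap.add_apply, ← map_add, D.leibniz, smul_eq_mul, smul_eq_mul]
  ring_nf

end MulPullback

section SemiringPowers

variable {A : Type*} [Semiring A]

lemma pow_succ_mul_of_mul_eq_add {x y z : A} (hxy : x * y = y * x + z) (hxz : Commute x z)
    (n : ℕ) : x ^ (n + 1) * y = y * x ^ (n + 1) + (n + 1) • (x ^ n * z) := by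
  induction n with
  | zero => simpa using hxy
  | succ n ih =>
    calc x ^ (n + 2) * y = x * (x ^ (n + 1) * y) := by rw [pow_succ', mul_assoc]
      _ = (x * y) * x ^ (n + 1) + (n + 1) • (x * x ^ n * z) := by
          rw [ih, mul_add, mul_smul_comm, mul_assoc, mul_assoc]
      _ = y * x ^ (n + 2) + (n + 2) • (x ^ (n + 1) * z) := by
          rw [hxy, add_mul, ← (hxz.pow_left (n + 1)).eq, mul_assoc, ← pow_succ', ← pow_succ',
            add_assoc, ← succ_nsmul']

lemma one_add_pow_eq_sum_choose (x : A) (n : ℕ) :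
    (1 + x) ^ n = ∑ m ∈ range (n + 1), n.choose m • x ^ m := by
  rw [add_comm, (Commute.one_right x).add_pow]
  simp [nsmul_eq_mul, Nat.cast_comm]

lemma succ_nsmul_mul_one_add_pow (x : A) (n : ℕ) :
    (n + 1) • (x * (1 + x) ^ n) = ∑ m ∈ range (n + 2), (m * (n + 1).choose m) • x ^ m := by
  rw [sum_range_succ', one_add_pow_eq_sum_choose, mul_sum, smul_sum]
  simp only [zero_mul, zero_nsmul, add_zero]
  refine sum_congr rfl fun m _ => ?_
  rw [mul_smul_comm, ← pow_succ', smul_smul, Nat.add_one_mul_choose_eq, mul_comm]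

lemma iterate_fwd_one_add_pow (φ : A →+ ℝ) (x : A) (m n : ℕ) :
    fwd^[m] (fun n => φ ((1 + x) ^ n)) n = φ (x ^ m * (1 + x) ^ n) := by
  induction m generalizing n with
  | zero => rw [Function.iterate_zero_apply, pow_zero, one_mul]
  | succ m ih =>
    rw [Function.iterate_succ_apply', fwd, ih, ih, pow_succ' (1 + x), one_add_mul, mul_add,
      map_add, add_sub_cancel_left, ← mul_assoc, ← pow_succ]

end SemiringPowers

section WalkForm

open PowerSeries

/-- The operator `G` for which `1 + G` advances the quadratic forms of the walk by one step. -/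
def walkGenerator : Module.End ℝ (BilinForm ℝ ℝ⟦X⟧) :=
  (1 / 4 : ℝ) • mulPullback (X ^ 2) (X ^ 2)
    + (1 / 2 : ℝ) • mulPullback (X * sqrtSeries 1) (X * sqrtSeries 1)
    + (1 / 2 : ℝ) • mulPullback (X * sqrtSeries (-1)) (X * sqrtSeries (-1))

lemma walkGenerator_apply (β : BilinForm ℝ ℝ⟦X⟧) (f g : ℝ⟦X⟧) :
    walkGenerator β f g = 1 / 4 * β (X ^ 2 * f) (X ^ 2 * g)
      + 1 / 2 * β (X * sqrtSeries 1 * f) (X * sqrtSeries 1 * g)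
      + 1 / 2 * β (X * sqrtSeries (-1) * f) (X * sqrtSeries (-1) * g) := rfl

lemma isPosSemidef_walkGenerator {β : BilinForm ℝ ℝ⟦X⟧} (hβ : β.IsPosSemidef) :
    (walkGenerator β).IsPosSemidef :=
  (((isPosSemidef_mulPullback hβ _).smul (by norm_num)).add
    ((isPosSemidef_mulPullback hβ _).smul (by norm_num))).add
    ((isPosSemidef_mulPullback hβ _).smul (by norm_num))

/-- The commutator of `walkGenerator` with the twisted Euler operators
`β ↦ β (euler · + c * ·) ·`, whatever the power series `c`. -/
def walkCommutator : Module.End ℝ (BilinForm ℝ ℝ⟦X⟧) :=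
  (1 / 4 : ℝ) • mulPullback (euler (X ^ 2)) (X ^ 2)
    + (1 / 2 : ℝ) • mulPullback (euler (X * sqrtSeries 1)) (X * sqrtSeries 1)
    + (1 / 2 : ℝ) • mulPullback (euler (X * sqrtSeries (-1))) (X * sqrtSeries (-1))

lemma walkGenerator_mul_leftTwist (c : ℝ⟦X⟧) :
    walkGenerator * leftTwist euler c = leftTwist euler c * walkGenerator + walkCommutator := by
  simp only [walkGenerator, walkCommutator, add_mul, mul_add, smul_mul_assoc, mul_smul_comm,
    mulPullback_mul_leftTwist, smul_add]
  abel

lemma commute_walkGenerator_walkCommutator : Commute walkGenerator walkCommutator := by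
  have hcommute (u v u' v' : ℝ⟦X⟧) (r s : ℝ) :
      Commute (r • mulPullback (R := ℝ) u v) (s • mulPullback u' v') :=
    ((commute_mulPullback u v u' v').smul_left r).smul_right s
  have hright (u v : ℝ⟦X⟧) (r : ℝ) : Commute (r • mulPullback u v) walkCommutator :=
    ((hcommute ..).add_right (hcommute ..)).add_right (hcommute ..)
  exact ((hright ..).add_left (hright ..)).add_left (hright ..)

lemma walkCommutator_apply_one_one (β : BilinForm ℝ ℝ⟦X⟧) :
    walkCommutator β 1 1 = walkGenerator β 1 1 + 1 / 4 * β (X ^ 2) (X ^ 2)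
      + 1 / 8 * β (X ^ 3 * invSqrt 1) (X * sqrtSeries 1)
      - 1 / 8 * β (X ^ 3 * invSqrt (-1)) (X * sqrtSeries (-1)) := by
  simp only [walkCommutator, walkGenerator, euler_X_sq, euler_X_mul_sqrtSeries,
    LinearMap.add_apply, LinearMap.smul_apply, mulPullback_apply, mul_one, map_add, map_smul,
    smul_eq_mul]
  ring

/-- The bilinear forms on power series that vanish when `X ^ d` divides the first argument. -/
def vanishingForms (d : ℕ) : Submodule ℝ (BilinForm ℝ ℝ⟦X⟧) where
  carrier := {β | ∀ f g, β (X ^ d * f) g = 0}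
  add_mem' hβ hγ f g := by rw [LinearMap.add_apply, LinearMap.add_apply, hβ, hγ, add_zero]
  zero_mem' _ _ := rfl
  smul_mem' c β hβ f g := by rw [LinearMap.smul_apply, LinearMap.smul_apply, hβ, smul_zero]

lemma vanishingForms_mono : Monotone vanishingForms :=
  monotone_nat_of_le_succ fun d β hβ f g => by rw [pow_succ, mul_assoc, hβ]

lemma vanishingForms_zero : vanishingForms 0 = ⊥ :=
  (Submodule.eq_bot_iff _).mpr fun β hβ => LinearMap.ext₂ fun f g => by simpa using hβ f g

lemma walkGenerator_mem_vanishingForms {d : ℕ} {β : BilinForm ℝ ℝ⟦X⟧}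
    (hβ : β ∈ vanishingForms (d + 1)) : walkGenerator β ∈ vanishingForms d := by
  have hshift (u f g : ℝ⟦X⟧) : β (X * u * (X ^ d * f)) g = 0 := by
    rw [show X * u * (X ^ d * f) = X ^ (d + 1) * (u * f) by ring]
    exact hβ _ _
  intro f g
  rw [walkGenerator_apply, sq, hshift, hshift, hshift]
  ring

lemma walkGenerator_pow_mem_vanishingForms {d : ℕ} (m : ℕ) {β : BilinForm ℝ ℝ⟦X⟧}
    (hβ : β ∈ vanishingForms (d + m)) : (walkGenerator ^ m) β ∈ vanishingForms d := by
  induction m generalizing β with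
  | zero => exact hβ
  | succ m ih =>
    rw [pow_succ, Module.End.mul_apply]
    exact ih (walkGenerator_mem_vanishingForms hβ)

/-- The rank one form `(f, g) ↦ [X ^ k] (f h) * [X ^ k] (g h)` with `h = invSqrtProd`, which
describes the walk at time `0`. -/
def initialForm (k : ℕ) : BilinForm ℝ ℝ⟦X⟧ :=
  LinearMap.BilinForm.linMulLin (coeff k ∘ₗ LinearMap.mulRight ℝ invSqrtProd)
    (coeff k ∘ₗ LinearMap.mulRight ℝ invSqrtProd)

lemma initialForm_apply (k : ℕ) (f g : ℝ⟦X⟧) :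
    initialForm k f g = coeff k (f * invSqrtProd) * coeff k (g * invSqrtProd) := rfl

lemma isPosSemidef_initialForm (k : ℕ) : (initialForm k).IsPosSemidef where
  eq _ _ := mul_comm ..
  nonneg _ := mul_self_nonneg _

lemma initialForm_mem_vanishingForms (k : ℕ) : initialForm k ∈ vanishingForms (k + 1) := by
  intro f g
  rw [initialForm_apply, mul_assoc, coeff_X_pow_mul', if_neg (by omega), zero_mul]

lemma leftTwist_initialForm (k : ℕ) :
    leftTwist euler logDerivInvSqrtProd (initialForm k) = (k : ℝ) • initialForm k := by
  refine LinearMap.ext₂ fun f g => ?_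
  have heuler : (euler f + logDerivInvSqrtProd * f) * invSqrtProd = euler (f * invSqrtProd) := by
    rw [Derivation.leibniz, euler_invSqrtProd, smul_eq_mul, smul_eq_mul]
    ring
  rw [leftTwist_apply, LinearMap.smul_apply, LinearMap.smul_apply, initialForm_apply,
    initialForm_apply, heuler, coeff_euler, smul_eq_mul, mul_assoc]

/-- The form whose value at `(1, 1)` is `Qk k n`. -/
def walkForm (k n : ℕ) : BilinForm ℝ ℝ⟦X⟧ := ((1 + walkGenerator) ^ n) (initialForm k)

lemma walkForm_zero (k : ℕ) : walkForm k 0 = initialForm k := rfl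

lemma walkForm_succ (k n : ℕ) :
    walkForm k (n + 1) = walkForm k n + walkGenerator (walkForm k n) := by
  rw [walkForm, pow_succ', Module.End.mul_apply, ← walkForm, LinearMap.add_apply,
    Module.End.one_apply]

lemma isPosSemidef_walkForm (k n : ℕ) : (walkForm k n).IsPosSemidef := by
  induction n with
  | zero => exact isPosSemidef_initialForm k
  | succ n ih =>
    rw [walkForm_succ]
    exact ih.add (isPosSemidef_walkGenerator ih)

lemma walkForm_mem_vanishingForms (k n : ℕ) : walkForm k n ∈ vanishingForms (k + 1) := by
  induction n with
  | zero => exact initialForm_mem_vanishingForms k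
  | succ n ih =>
    rw [walkForm_succ]
    exact add_mem ih
      (walkGenerator_mem_vanishingForms (vanishingForms_mono (Nat.le_succ _) ih))

/-- The Newton coefficients of the sequence of forms `walkForm k`. -/
def newtonForm (k m : ℕ) : BilinForm ℝ ℝ⟦X⟧ := (walkGenerator ^ m) (initialForm k)

lemma isPosSemidef_newtonForm (k m : ℕ) : (newtonForm k m).IsPosSemidef := by
  induction m with
  | zero => exact isPosSemidef_initialForm k
  | succ m ih =>
    rw [newtonForm, pow_succ', Module.End.mul_apply]
    exact isPosSemidef_walkGenerator ih

lemma newtonForm_eq_zero {k m : ℕ} (hkm : k < m) : newtonForm k m = 0 := by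
  have hmem : newtonForm k m ∈ vanishingForms 0 :=
    walkGenerator_pow_mem_vanishingForms m
      (vanishingForms_mono (by omega) (initialForm_mem_vanishingForms k))
  rwa [vanishingForms_zero, Submodule.mem_bot] at hmem

lemma walkForm_apply_eq_sum (k n : ℕ) (f g : ℝ⟦X⟧) :
    walkForm k n f g = ∑ m ∈ range (n + 1), (n.choose m : ℝ) * newtonForm k m f g := by
  rw [walkForm, one_add_pow_eq_sum_choose]
  simp only [LinearMap.sum_apply, LinearMap.smul_apply]
  simp only [nsmul_eq_mul, newtonForm]

lemma succ_mul_walkGenerator_walkForm (k n : ℕ) (f g : ℝ⟦X⟧) :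
    (n + 1) * walkGenerator (walkForm k n) f g =
      ∑ m ∈ range (n + 2), m * ((n + 1).choose m * newtonForm k m f g) := by
  have h := LinearMap.congr_fun₂
    (LinearMap.congr_fun (succ_nsmul_mul_one_add_pow walkGenerator n) (initialForm k)) f g
  simp only [LinearMap.sum_apply, LinearMap.smul_apply, Module.End.mul_apply] at h
  simpa only [walkForm, newtonForm, nsmul_eq_mul, Nat.cast_mul, Nat.cast_add, Nat.cast_one,
    mul_assoc] using h

lemma succ_mul_walkGenerator_walkForm_le (k n : ℕ) (f : ℝ⟦X⟧) :
    (n + 1) * walkGenerator (walkForm k n) f f ≤ k * walkForm k (n + 1) f f := by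
  rw [succ_mul_walkGenerator_walkForm, walkForm_apply_eq_sum, mul_sum]
  refine sum_le_sum fun m _ => ?_
  rcases le_or_gt m k with hmk | hkm
  · have hnonneg : 0 ≤ newtonForm k m f f := (isPosSemidef_newtonForm k m).isNonneg.nonneg f
    gcongr
  · simp [newtonForm_eq_zero hkm]

lemma walkGenerator_walkForm_le {k n : ℕ} (hkn : 2 * k ≤ n + 1) (f : ℝ⟦X⟧) :
    walkGenerator (walkForm k n) f f ≤ 2 * (k / (n + 1)) * walkForm k n f f := by
  have hmean := succ_mul_walkGenerator_walkForm_le k n f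
  have hnonneg := (isPosSemidef_walkGenerator (isPosSemidef_walkForm k n)).isNonneg.nonneg f
  have hcast : (2 * k : ℝ) ≤ n + 1 := by exact_mod_cast hkn
  rw [walkForm_succ, LinearMap.add_apply, LinearMap.add_apply] at hmean
  rw [mul_div_assoc', div_mul_eq_mul_div, le_div_iff₀ (by positivity)]
  nlinarith [mul_le_mul_of_nonneg_right hcast hnonneg]

lemma smul_walkForm_succ_eq (k n : ℕ) :
    (k : ℝ) • walkForm k (n + 1) =
      leftTwist euler logDerivInvSqrtProd (walkForm k (n + 1))
        + (n + 1) • walkCommutator (walkForm k n) := by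
  have hmul := walkGenerator_mul_leftTwist logDerivInvSqrtProd
  have hcommute : Commute (1 + walkGenerator) walkCommutator :=
    (Commute.one_left _).add_left commute_walkGenerator_walkCommutator
  have hpow := pow_succ_mul_of_mul_eq_add (x := 1 + walkGenerator)
    (y := leftTwist euler logDerivInvSqrtProd) (z := walkCommutator)
    (by rw [add_mul, mul_add, one_mul, mul_one, hmul, add_assoc])
    hcommute n
  have h := LinearMap.congr_fun hpow (initialForm k)
  rwa [(hcommute.pow_left n).eq, Module.End.mul_apply, leftTwist_initialForm, map_smul] at h

end WalkForm

section SeminormEstimates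

open PowerSeries

lemma seminorm_X_pow_mul_le {p : Seminorm ℝ ℝ⟦X⟧} {d : ℕ} (hp : ∀ f, p (X ^ d * f) = 0)
    {r s : ℝ} (hr : 0 ≤ r) (hrs : r * s < 1) {i : ℕ}
    (hstep : ∀ j ≥ i, p (X ^ (j + 1)) ≤ s * p (X ^ j)) {M : ℝ} {f : ℝ⟦X⟧}
    (hf : ∀ j, |coeff j f| ≤ M * r ^ j) :
    p (X ^ i * f) ≤ M / (1 - r * s) * p (X ^ i) := by
  have hM : 0 ≤ M := by simpa using (abs_nonneg _).trans (hf 0)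
  rcases le_or_gt d i with hdi | _
  · rw [← Nat.add_sub_cancel' hdi, pow_add, mul_assoc, hp]
    exact mul_nonneg (div_nonneg hM (by linarith)) (apply_nonneg p _)
  · let g : ℝ⟦X⟧ := mk fun j => coeff (j + 1) f
    have hsplit : X ^ i * f = X ^ (i + 1) * g + coeff 0 f • X ^ i := by
      conv_lhs => rw [eq_X_mul_shift_add_const f]
      rw [smul_eq_C_mul, coeff_zero_eq_constantCoeff_apply]
      ring
    have hg (j : ℕ) : |coeff j g| ≤ M * r * r ^ j := by
      rw [coeff_mk, mul_assoc, ← pow_succ']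
      exact hf (j + 1)
    have hrec : p (X ^ (i + 1) * g) ≤ M * r / (1 - r * s) * p (X ^ (i + 1)) :=
      seminorm_X_pow_mul_le hp hr hrs (fun j hj => hstep j (by omega)) hg
    have hden : (0 : ℝ) < 1 - r * s := by linarith
    calc p (X ^ i * f) ≤ p (X ^ (i + 1) * g) + p (coeff 0 f • X ^ i) :=
          hsplit ▸ map_add_le_add p _ _
      _ ≤ M * r / (1 - r * s) * (s * p (X ^ i)) + M * p (X ^ i) := by
          rw [map_smul_eq_mul, Real.norm_eq_abs]
          gcongr
          · exact hrec.trans (by gcongr; exact hstep i le_rfl)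
          · simpa using hf 0
      _ = M / (1 - r * s) * p (X ^ i) := by field_simp; ring
termination_by d - i

lemma seminorm_X_pow_succ_le {p : Seminorm ℝ ℝ⟦X⟧} {d : ℕ} (hp : ∀ f, p (X ^ d * f) = 0)
    {c : ℝ} (hc : c ∈ Set.Icc 0 1) (hmean : ∀ i, p (X ^ (i + 1) * sqrtMean) ≤ c * p (X ^ i))
    (i : ℕ) : p (X ^ (i + 1)) ≤ 4 / 3 * c * p (X ^ i) := by
  rcases le_or_gt d i with hdi | _
  · have hzero : p (X ^ (i + 1)) = 0 := by
      rw [← Nat.add_sub_cancel' hdi, add_assoc, pow_add, hp]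
    rw [hzero]
    exact mul_nonneg (mul_nonneg (by norm_num) hc.1) (apply_nonneg p _)
  · have hstep (j : ℕ) (_ : i + 1 ≤ j) : p (X ^ (j + 1)) ≤ 4 / 3 * p (X ^ j) :=
      (seminorm_X_pow_succ_le hp hc hmean j).trans
        (mul_le_mul_of_nonneg_right (by linarith [hc.2]) (apply_nonneg p _))
    obtain ⟨f, hsqrtMean, hf⟩ := exists_sqrtMean_eq_one_add
    have htail : p (X ^ (i + 5) * f) ≤ 1 / 4 * p (X ^ (i + 1)) := by
      have hseries := seminorm_X_pow_mul_le hp (by norm_num) (by norm_num)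
        (fun j (_ : j ≥ i + 5) => hstep j (by omega)) hf
      norm_num at hseries
      linarith [hstep (i + 1) le_rfl, hstep (i + 2) (by omega), hstep (i + 3) (by omega),
        hstep (i + 4) (by omega), apply_nonneg p (X ^ (i + 1))]
    have hsplit : X ^ (i + 1) = X ^ (i + 1) * sqrtMean - X ^ (i + 5) * f := by
      rw [hsqrtMean]
      ring
    have htriangle : p (X ^ (i + 1)) ≤ p (X ^ (i + 1) * sqrtMean) + p (X ^ (i + 5) * f) := by
      conv_lhs => rw [hsplit]
      exact map_sub_le_add p _ _
    linarith [hmean i]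
termination_by d - i

/-- The seminorm of the form `walkForm k n`. -/
def walkSeminorm (k n : ℕ) : Seminorm ℝ ℝ⟦X⟧ :=
  formSeminorm (walkForm k n) (isPosSemidef_walkForm k n)

lemma walkSeminorm_sq (k n : ℕ) (f : ℝ⟦X⟧) : walkSeminorm k n f ^ 2 = walkForm k n f f :=
  formSeminorm_sq _ f

lemma abs_walkForm_le_walkSeminorm_mul (k n : ℕ) (f g : ℝ⟦X⟧) :
    |walkForm k n f g| ≤ walkSeminorm k n f * walkSeminorm k n g :=
  abs_apply_le_formSeminorm_mul _ f g

lemma walkSeminorm_X_pow_mul_eq_zero (k n : ℕ) (f : ℝ⟦X⟧) :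
    walkSeminorm k n (X ^ (k + 1) * f) = 0 := by
  rw [← sq_eq_zero_iff, walkSeminorm_sq]
  exact walkForm_mem_vanishingForms k n f _

lemma walkSeminorm_X_pow_succ_mul_sqrtMean_le {k n : ℕ} (hkn : 2 * k ≤ n + 1) (i : ℕ) :
    walkSeminorm k n (X ^ (i + 1) * sqrtMean) ≤
      √(2 * (k / (n + 1))) * walkSeminorm k n (X ^ i) := by
  apply le_of_sq_le_sq _ (by positivity)
  rw [mul_pow, Real.sq_sqrt (by positivity), walkSeminorm_sq k n (X ^ i)]
  have hmean : X ^ (i + 1) * sqrtMean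
      = (1 / 2 : ℝ) • (X * sqrtSeries 1 * X ^ i + X * sqrtSeries (-1) * X ^ i) := by
    rw [sqrtMean]
    algebra
  calc walkSeminorm k n (X ^ (i + 1) * sqrtMean) ^ 2
      ≤ 1 / 2 * (walkSeminorm k n (X * sqrtSeries 1 * X ^ i) ^ 2
          + walkSeminorm k n (X * sqrtSeries (-1) * X ^ i) ^ 2) :=
        hmean ▸ seminorm_half_smul_add_sq_le _ _ _
    _ ≤ walkGenerator (walkForm k n) (X ^ i) (X ^ i) := by
        rw [walkGenerator_apply, ← walkSeminorm_sq, ← walkSeminorm_sq, ← walkSeminorm_sq]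
        linarith [sq_nonneg (walkSeminorm k n (X ^ 2 * X ^ i))]
    _ ≤ 2 * (k / (n + 1)) * walkForm k n (X ^ i) (X ^ i) := walkGenerator_walkForm_le hkn _

/-- The rate at which `walkSeminorm k n (X ^ i)` decays with `i`. -/
def contractionRate (k n : ℕ) : ℝ := 4 / 3 * √(2 * (k / (n + 1)))

lemma contractionRate_nonneg (k n : ℕ) : 0 ≤ contractionRate k n := by
  unfold contractionRate
  positivity

lemma sqrt_two_mul_div_le_one {k n : ℕ} (hkn : 2 * k ≤ n + 1) :
    √(2 * (k / (n + 1) : ℝ)) ≤ 1 := by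
  rw [Real.sqrt_le_one, mul_div_assoc', div_le_one (by positivity)]
  exact_mod_cast hkn

lemma contractionRate_pow_four_le (k n : ℕ) :
    contractionRate k n ^ 4 ≤ 13 * (k / (n + 1)) ^ 2 := by
  have hsqrt : √(2 * (k / (n + 1) : ℝ)) ^ 4 = (2 * (k / (n + 1))) ^ 2 := by
    rw [show 4 = 2 * 2 from rfl, pow_mul, Real.sq_sqrt (by positivity)]
  rw [contractionRate, mul_pow, hsqrt]
  linarith [sq_nonneg (k / (n + 1) : ℝ)]

lemma contractionRate_succ_le (k n : ℕ) : contractionRate k (n + 1) ≤ contractionRate k n := by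
  unfold contractionRate
  gcongr
  linarith

lemma walkSeminorm_X_pow_succ_le {k n : ℕ} (hkn : 2 * k ≤ n + 1) (i : ℕ) :
    walkSeminorm k n (X ^ (i + 1)) ≤ contractionRate k n * walkSeminorm k n (X ^ i) :=
  seminorm_X_pow_succ_le (walkSeminorm_X_pow_mul_eq_zero k n)
    ⟨Real.sqrt_nonneg _, sqrt_two_mul_div_le_one hkn⟩
    (walkSeminorm_X_pow_succ_mul_sqrtMean_le hkn) i

lemma walkSeminorm_X_pow_le {k n : ℕ} (hkn : 2 * k ≤ n + 1) (i : ℕ) :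
    walkSeminorm k n (X ^ i) ≤ contractionRate k n ^ i * walkSeminorm k n 1 := by
  induction i with
  | zero => simp
  | succ i ih =>
    rw [pow_succ' (contractionRate k n), mul_assoc]
    exact (walkSeminorm_X_pow_succ_le hkn i).trans
      (mul_le_mul_of_nonneg_left ih (contractionRate_nonneg k n))

lemma walkSeminorm_X_pow_mul_le {k n : ℕ} (hkn : 2 * k ≤ n + 1) (i : ℕ) {f : ℝ⟦X⟧}
    (hf : ∀ j, |coeff j f| ≤ (1 / 2) ^ j) :
    walkSeminorm k n (X ^ i * f) ≤ 3 * (contractionRate k n ^ i * walkSeminorm k n 1) := by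
  have hrate : contractionRate k n ≤ 4 / 3 := by
    unfold contractionRate
    linarith [sqrt_two_mul_div_le_one hkn]
  have hseries := seminorm_X_pow_mul_le (walkSeminorm_X_pow_mul_eq_zero k n) (by norm_num)
    (by norm_num) (i := i) (M := 1)
    (fun j _ => (walkSeminorm_X_pow_succ_le hkn j).trans
      (mul_le_mul_of_nonneg_right hrate (apply_nonneg _ _)))
    (fun j => (hf j).trans_eq (one_mul _).symm)
  norm_num at hseries
  linarith [walkSeminorm_X_pow_le hkn i]

lemma mul_walkForm_succ_sub_walkGenerator_eq (k n : ℕ) :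
    k * walkForm k (n + 1) 1 1 - (n + 1) * walkGenerator (walkForm k n) 1 1 =
      walkForm k (n + 1) logDerivInvSqrtProd 1
        + (n + 1) * (walkCommutator (walkForm k n) 1 1 - walkGenerator (walkForm k n) 1 1) := by
  have h := LinearMap.congr_fun₂ (smul_walkForm_succ_eq k n) 1 1
  rw [LinearMap.add_apply, LinearMap.add_apply, leftTwist_apply, Derivation.map_one_eq_zero,
    zero_add, mul_one] at h
  simp only [LinearMap.smul_apply, smul_eq_mul, nsmul_eq_mul, Nat.cast_add_one] at h
  linear_combination h

lemma walkForm_logDeriv_le {k n : ℕ} (hkn : 2 * k ≤ n + 1) :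
    walkForm k n logDerivInvSqrtProd 1 ≤ 3 / 8 * (contractionRate k n ^ 4 * walkForm k n 1 1) := by
  have hseries := walkSeminorm_X_pow_mul_le hkn 4 abs_coeff_invSqrtProd_sq_le
  have hform := le_of_abs_le (abs_walkForm_le_walkSeminorm_mul k n (X ^ 4 * invSqrtProd ^ 2) 1)
  rw [logDerivInvSqrtProd, map_smul, LinearMap.smul_apply, smul_eq_mul, ← walkSeminorm_sq]
  linarith [mul_le_mul_of_nonneg_right hseries (apply_nonneg (walkSeminorm k n) 1)]

lemma walkCommutator_sub_walkGenerator_le {k n : ℕ} (hkn : 2 * k ≤ n + 1) :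
    walkCommutator (walkForm k n) 1 1 - walkGenerator (walkForm k n) 1 1 ≤
      5 / 2 * (contractionRate k n ^ 4 * walkForm k n 1 1) := by
  have hX_sq : walkForm k n (X ^ 2) (X ^ 2) ≤ contractionRate k n ^ 4 * walkForm k n 1 1 := by
    rw [← walkSeminorm_sq, ← walkSeminorm_sq, show 4 = 2 * 2 from rfl, pow_mul, ← mul_pow]
    exact pow_le_pow_left₀ (apply_nonneg _ _) (walkSeminorm_X_pow_le hkn 2) 2
  have hcross {ε : ℝ} (hε : |ε| ≤ 1) :
      |walkForm k n (X ^ 3 * invSqrt ε) (X * sqrtSeries ε)| ≤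
        9 * (contractionRate k n ^ 4 * walkForm k n 1 1) := by
    have hX_pow_three := walkSeminorm_X_pow_mul_le hkn 3 (abs_coeff_invSqrt_le hε)
    have hX := walkSeminorm_X_pow_mul_le hkn 1 (abs_coeff_sqrtSeries_le hε)
    rw [pow_one X] at hX
    calc |walkForm k n (X ^ 3 * invSqrt ε) (X * sqrtSeries ε)|
        ≤ walkSeminorm k n (X ^ 3 * invSqrt ε) * walkSeminorm k n (X * sqrtSeries ε) :=
          abs_walkForm_le_walkSeminorm_mul ..
      _ ≤ 3 * (contractionRate k n ^ 3 * walkSeminorm k n 1)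
            * (3 * (contractionRate k n ^ 1 * walkSeminorm k n 1)) :=
          mul_le_mul hX_pow_three hX (apply_nonneg _ _)
            ((apply_nonneg _ _).trans hX_pow_three)
      _ = 9 * (contractionRate k n ^ 4 * walkForm k n 1 1) := by rw [← walkSeminorm_sq]; ring
  rw [walkCommutator_apply_one_one]
  linarith [le_of_abs_le (hcross (ε := 1) (by simp)),
    neg_le_of_abs_le (hcross (ε := -1) (by simp))]

lemma mul_walkForm_succ_sub_walkGenerator_le {k n : ℕ} (hkn : 2 * k ≤ n + 1) :
    k * walkForm k (n + 1) 1 1 - (n + 1) * walkGenerator (walkForm k n) 1 1 ≤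
      40 * (k ^ 2 / (n + 1)) * walkForm k (n + 1) 1 1 := by
  have hn : (1 : ℝ) ≤ n + 1 := by linarith [(Nat.cast_nonneg n : (0 : ℝ) ≤ n)]
  have hrate : contractionRate k (n + 1) ^ 4 ≤ contractionRate k n ^ 4 :=
    pow_le_pow_left₀ (contractionRate_nonneg k _) (contractionRate_succ_le k n) 4
  have hrate_le := contractionRate_pow_four_le k n
  have hnonneg : 0 ≤ walkForm k (n + 1) 1 1 := (isPosSemidef_walkForm k _).isNonneg.nonneg 1
  have hnonneg' : 0 ≤ walkForm k n 1 1 := (isPosSemidef_walkForm k n).isNonneg.nonneg 1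
  have hmono : walkForm k n 1 1 ≤ walkForm k (n + 1) 1 1 := by
    rw [walkForm_succ, LinearMap.add_apply, LinearMap.add_apply]
    exact le_add_of_nonneg_right
      ((isPosSemidef_walkGenerator (isPosSemidef_walkForm k n)).isNonneg.nonneg 1)
  rw [mul_walkForm_succ_sub_walkGenerator_eq]
  set w := walkForm k (n + 1) 1 1
  calc walkForm k (n + 1) logDerivInvSqrtProd 1
        + (n + 1) * (walkCommutator (walkForm k n) 1 1 - walkGenerator (walkForm k n) 1 1)
      ≤ 3 / 8 * (contractionRate k (n + 1) ^ 4 * w)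
        + (n + 1) * (5 / 2 * (contractionRate k n ^ 4 * walkForm k n 1 1)) := by
        gcongr
        · exact walkForm_logDeriv_le (by omega)
        · exact walkCommutator_sub_walkGenerator_le hkn
    _ ≤ 3 / 8 * (13 * (k / (n + 1)) ^ 2 * w)
          + (n + 1) * (5 / 2 * (13 * (k / (n + 1)) ^ 2 * w)) := by
        gcongr
        exact hrate.trans hrate_le
    _ ≤ (n + 1) * (3 / 8 * (13 * (k / (n + 1)) ^ 2 * w))
          + (n + 1) * (5 / 2 * (13 * (k / (n + 1)) ^ 2 * w)) := by
        refine add_le_add ?_ le_rfl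
        exact le_mul_of_one_le_left (by positivity) hn
    _ = 13 * (23 / 8) * (k ^ 2 / (n + 1)) * w := by field_simp; ring
    _ ≤ 40 * (k ^ 2 / (n + 1)) * w := by gcongr; norm_num

end SeminormEstimates

section GeneratingSeries

open PowerSeries

lemma gbinom_succ (x : ℝ) (k : ℕ) : gbinom x (k + 1) = gbinom x k * ((x - k) / (k + 1)) := by
  rw [gbinom, gbinom, prod_range_succ, Nat.factorial_succ, Nat.cast_mul, mul_comm (_ : ℝ),
    mul_div_mul_comm, Nat.cast_succ, mul_comm]

lemma gbinom_succ' (x : ℝ) (k : ℕ) : gbinom x (k + 1) = x / (k + 1) * gbinom (x - 1) k := by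
  rw [gbinom, gbinom, prod_range_succ', Nat.factorial_succ, Nat.cast_mul, mul_comm _ (x - _),
    mul_div_mul_comm, Nat.cast_zero, sub_zero, Nat.cast_succ]
  simp only [Nat.cast_succ, sub_sub, add_comm]

lemma gbinom_add_one_sub (x : ℝ) (k : ℕ) :
    gbinom (x + 1) (k + 1) - gbinom x (k + 1) = gbinom x k := by
  rw [gbinom_succ', gbinom_succ, add_sub_cancel_right]
  field_simp
  ring

lemma gbinom_natCast (n k : ℕ) : gbinom n k = n.choose k := by
  rw [Nat.cast_choose_eq_descPochhammer_div, descPochhammer_eval_eq_prod_range, gbinom]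

lemma F_zero (x : ℝ) : F 0 x = 1 := by
  simp [F, gbinom]

lemma F_add_half_sub (k : ℕ) (x : ℝ) :
    F (k + 1) (x + 1 / 2) - F (k + 1) (x - 1 / 2) = F k x := by
  have hleft : x + 1 / 2 + (((k + 1 : ℕ) : ℝ) - 1) / 2 = x + (k - 1) / 2 + 1 := by
    push_cast; ring
  have hright : x - 1 / 2 + (((k + 1 : ℕ) : ℝ) - 1) / 2 = x + (k - 1) / 2 := by
    push_cast; ring
  rw [F, F, F, hleft, hright, gbinom_add_one_sub]

lemma F_succ_half (k : ℕ) : F (k + 1) (1 / 2) = 1 / 2 * F k 0 := by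
  rw [F, F, gbinom_succ']
  push_cast
  field_simp
  ring_nf

lemma F_add_two_zero (k : ℕ) :
    F (k + 2) 0 = -(k + 1) / (4 * (k + 2)) * F k 0 := by
  have harg : (0 : ℝ) + (((k + 2 : ℕ) : ℝ) - 1) / 2 - 1 = 0 + (k - 1) / 2 := by push_cast; ring
  rw [F, F, gbinom_succ', gbinom_succ, harg]
  push_cast
  field_simp
  ring

lemma F_apply_zero : ∀ k, F k 0 = invSqrtCoeff 1 k
  | 0 => F_zero 0
  | 1 => by simp [F, gbinom, invSqrtCoeff]
  | k + 2 => by rw [F_add_two_zero, F_apply_zero k, invSqrtCoeff, one_mul]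

/-- The generating series of the sequence `k ↦ F k x`. -/
def genF (x : ℝ) : ℝ⟦X⟧ := mk fun k => F k x

lemma genF_zero : genF 0 = invSqrt 1 := by
  ext k
  rw [genF, invSqrt, coeff_mk, coeff_mk, F_apply_zero]

lemma genF_half : genF (1 / 2) = 1 + (1 / 2 : ℝ) • (X * genF 0) := by
  ext k
  cases k with
  | zero => simp [genF, F_zero]
  | succ k => rw [map_add, coeff_smul, coeff_succ_X_mul, coeff_one, if_neg k.succ_ne_zero, zero_add,
      genF, genF, coeff_mk, coeff_mk, F_succ_half, smul_eq_mul]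

lemma genF_add_half_sub (x : ℝ) : genF (x + 1 / 2) - genF (x - 1 / 2) = X * genF x := by
  ext k
  cases k with
  | zero => simp [genF, F_zero]
  | succ k => rw [coeff_succ_X_mul, map_sub, genF, genF, genF, coeff_mk, coeff_mk, coeff_mk,
      F_add_half_sub]

lemma genF_add_one_sub (x : ℝ) : genF (x + 1) - genF x = X * genF (x + 1 / 2) := by
  rw [← genF_add_half_sub, add_assoc, add_halves, add_sub_cancel_right]

lemma genF_add_one_add_genF_sub_one (x : ℝ) :
    genF (x + 1) + genF (x - 1) = (2 + X ^ 2) * genF x := by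
  have hleft := genF_add_one_sub (x - 1)
  rw [sub_add_cancel, show x - 1 + 1 / 2 = x - 1 / 2 by ring] at hleft
  linear_combination genF_add_one_sub x - hleft + X * genF_add_half_sub x

/-- The series by which `genF` gets multiplied when an integer argument grows by `1`. -/
def stepFactor : ℝ⟦X⟧ := 1 + (1 / 2 : ℝ) • X ^ 2 + X * sqrtSeries 1

/-- The inverse of `stepFactor`. -/
def invStepFactor : ℝ⟦X⟧ := 1 + (1 / 2 : ℝ) • X ^ 2 - X * sqrtSeries 1

lemma stepFactor_add_invStepFactor : stepFactor + invStepFactor = 2 + X ^ 2 := by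
  rw [stepFactor, invStepFactor]
  algebra

lemma invStepFactor_mul_stepFactor : invStepFactor * stepFactor = 1 := by
  have hsqrt := sqrtSeries_sq 1
  rw [quadFactor] at hsqrt
  rw [stepFactor, invStepFactor]
  linear_combination (norm := algebra) -X ^ 2 * hsqrt

lemma genF_intCast_add_one (x : ℤ) : genF (x + 1) = stepFactor * genF x := by
  induction x using Int.induction_on with
  | zero =>
    have h := genF_add_one_sub 0
    rw [zero_add, zero_add, genF_half] at h
    rw [Int.cast_zero, zero_add, stepFactor]
    rw [genF_zero] at h ⊢
    linear_combination (norm := algebra) h - X * sqrtSeries_mul_invSqrt 1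
  | succ x ih =>
    have h := genF_add_one_add_genF_sub_one ((x : ℝ) + 1)
    rw [add_sub_cancel_right, ← stepFactor_add_invStepFactor] at h
    push_cast at ih ⊢
    linear_combination h + invStepFactor * ih + genF x * invStepFactor_mul_stepFactor
  | pred x ih =>
    have h := genF_add_one_add_genF_sub_one (-x : ℝ)
    rw [← stepFactor_add_invStepFactor] at h
    push_cast at ih ⊢
    rw [sub_add_cancel]
    linear_combination -stepFactor * h + stepFactor * ih
      - genF (-x : ℝ) * invStepFactor_mul_stepFactor

lemma genF_intCast_sub_one (x : ℤ) : genF (x - 1) = invStepFactor * genF x := by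
  have h := genF_intCast_add_one (x - 1)
  push_cast at h
  rw [sub_add_cancel] at h
  rw [h, ← mul_assoc, invStepFactor_mul_stepFactor, one_mul]

/-- The inclusion of real into complex power series. -/
def ofRealSeries : ℝ⟦X⟧ →ₐ[ℝ] ℂ⟦X⟧ := mapAlgHom (Algebra.ofId ℝ ℂ)

/-- The substitution `f ↦ f (i X)`. -/
def rotateSeries : ℝ⟦X⟧ →ₐ[ℝ] ℂ⟦X⟧ :=
  ((rescaleAlgHom Complex.I).restrictScalars ℝ).comp ofRealSeries

lemma coeff_ofRealSeries (k : ℕ) (f : ℝ⟦X⟧) :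
    coeff k (ofRealSeries f) = ((coeff k f : ℝ) : ℂ) := by
  rw [ofRealSeries, mapAlgHom_apply, coeff_map]
  rfl

lemma coeff_rotateSeries (k : ℕ) (f : ℝ⟦X⟧) :
    coeff k (rotateSeries f) = Complex.I ^ k * ((coeff k f : ℝ) : ℂ) := by
  rw [← coeff_ofRealSeries, ← coeff_rescale, ← coe_rescaleAlgHom]
  rfl

lemma rotateSeries_X : rotateSeries X = Complex.I • ofRealSeries X := by
  ext k
  rw [coeff_rotateSeries, coeff_smul, coeff_ofRealSeries, smul_eq_mul, coeff_X]
  split_ifs with hk <;> simp [hk]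

lemma rotateSeries_X_sq : rotateSeries (X ^ 2) = -ofRealSeries (X ^ 2) := by
  rw [map_pow, map_pow, rotateSeries_X, smul_pow, Complex.I_sq, neg_one_smul]

lemma rotateSeries_invSqrt (ε : ℝ) : rotateSeries (invSqrt ε) = ofRealSeries (invSqrt (-ε)) := by
  ext k
  rw [coeff_rotateSeries, coeff_ofRealSeries, invSqrt, invSqrt, coeff_mk, coeff_mk]
  induction k using Nat.twoStepInduction with
  | zero => simp [invSqrtCoeff]
  | one => simp [invSqrtCoeff]
  | more k ih _ =>
    rw [invSqrtCoeff, invSqrtCoeff, Complex.ofReal_mul _ (invSqrtCoeff (-ε) k), ← ih, pow_add,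
      Complex.I_sq]
    push_cast
    ring

lemma rotateSeries_sqrtSeries (ε : ℝ) :
    rotateSeries (sqrtSeries ε) = ofRealSeries (sqrtSeries (-ε)) := by
  rw [sqrtSeries, sqrtSeries, map_mul, map_mul, rotateSeries_invSqrt, quadFactor, quadFactor,
    map_add, map_add, map_one, map_one, map_smul, map_smul, rotateSeries_X_sq, neg_div, neg_smul,
    smul_neg]

lemma rotateSeries_X_mul_sqrtSeries (ε : ℝ) :
    rotateSeries (X * sqrtSeries ε) = Complex.I • ofRealSeries (X * sqrtSeries (-ε)) := by
  rw [map_mul, rotateSeries_X, rotateSeries_sqrtSeries, smul_mul_assoc, ← map_mul]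

lemma rotateSeries_stepFactor : rotateSeries stepFactor =
    ofRealSeries (1 - (1 / 2 : ℝ) • X ^ 2) + Complex.I • ofRealSeries (X * sqrtSeries (-1)) := by
  rw [stepFactor, map_add, map_add, map_sub, map_one, map_one, map_smul, map_smul,
    rotateSeries_X_sq, smul_neg, ← sub_eq_add_neg, rotateSeries_X_mul_sqrtSeries]

lemma rotateSeries_invStepFactor : rotateSeries invStepFactor =
    ofRealSeries (1 - (1 / 2 : ℝ) • X ^ 2) - Complex.I • ofRealSeries (X * sqrtSeries (-1)) := by
  rw [invStepFactor, map_sub, map_add, map_sub, map_one, map_one, map_smul, map_smul,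
    rotateSeries_X_sq, smul_neg, ← sub_eq_add_neg, rotateSeries_X_mul_sqrtSeries]

/-- The generating series of the sequence `k ↦ Z k x y`. -/
def genZ (x y : ℝ) : ℂ⟦X⟧ := rotateSeries (genF y) * ofRealSeries (genF x)

lemma coeff_genZ (k : ℕ) (x y : ℝ) : coeff k (genZ x y) = Z k x y := by
  rw [genZ, coeff_mul, Finset.Nat.sum_antidiagonal_eq_sum_range_succ_mk, Z]
  refine sum_congr rfl fun l _ => ?_
  rw [coeff_rotateSeries, coeff_ofRealSeries, genF, genF, coeff_mk, coeff_mk]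
  ring

end GeneratingSeries

section RandomWalk

open PowerSeries

lemma sum_Sfin (φ : ℤ × ℤ → ℝ) :
    ∑ e ∈ Sfin, φ e = φ (1, 0) + φ (-1, 0) + φ (0, 1) + φ (0, -1) := by
  rw [Sfin, sum_insert (by decide), sum_insert (by decide), sum_insert (by decide),
    sum_singleton, add_assoc, add_assoc]

lemma Q_succ (u : ℤ × ℤ → ℂ) (n : ℕ) :
    Q u (n + 1) = (4 : ℝ)⁻¹ ^ n * ∑ s ∈ Fintype.piFinset (fun _ : Fin n => Sfin),
      (4 : ℝ)⁻¹ * ∑ e ∈ Sfin, ‖u (∑ i, s i + e)‖ ^ 2 := by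
  rw [Q, pow_succ, mul_assoc, ← mul_sum, sum_comm, ← sum_product']
  congr 2
  refine sum_equiv (Fin.consEquiv fun _ => ℤ × ℤ).symm (fun s => ?_) (fun s _ => ?_)
  · rw [Fin.mem_piFinset_iff_zero_tail, mem_product]
    rfl
  · rw [Fin.sum_univ_succ, add_comm]
    rfl

/-- The value `[X ^ k] (f * genZ p.1 p.2)` of a lattice function at `p`, which is linear in `f`
and equal to `Z k p.1 p.2` for `f = 1`. -/
def weightedZ (k : ℕ) (p : ℤ × ℤ) : ℝ⟦X⟧ →ₗ[ℝ] ℂ :=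
  (coeff k).restrictScalars ℝ ∘ₗ LinearMap.mulRight ℝ (genZ p.1 p.2) ∘ₗ ofRealSeries.toLinearMap

lemma weightedZ_apply (k : ℕ) (p : ℤ × ℤ) (f : ℝ⟦X⟧) :
    weightedZ k p f = coeff k (ofRealSeries f * genZ p.1 p.2) := rfl

lemma weightedZ_one (k : ℕ) (p : ℤ × ℤ) : weightedZ k p 1 = Z k p.1 p.2 := by
  rw [weightedZ_apply, map_one, one_mul, coeff_genZ]

lemma weightedZ_zero (k : ℕ) (f : ℝ⟦X⟧) :
    weightedZ k 0 f = ((coeff k (f * invSqrtProd) : ℝ) : ℂ) := by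
  rw [weightedZ_apply, Prod.fst_zero, Prod.snd_zero, Int.cast_zero, genZ, genF_zero,
    rotateSeries_invSqrt, mul_comm (ofRealSeries _) (ofRealSeries (invSqrt 1)), ← map_mul,
    ← map_mul, coeff_ofRealSeries, invSqrtProd]

lemma weightedZ_add_right (k : ℕ) (p : ℤ × ℤ) (f : ℝ⟦X⟧) :
    weightedZ k (p + (1, 0)) f = weightedZ k p (stepFactor * f) := by
  rw [weightedZ_apply, weightedZ_apply, genZ, genZ, Prod.fst_add, Prod.snd_add, add_zero,
    Int.cast_add, Int.cast_one, genF_intCast_add_one, map_mul ofRealSeries stepFactor,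
    map_mul ofRealSeries _ f]
  congr 1
  ring

lemma weightedZ_add_left (k : ℕ) (p : ℤ × ℤ) (f : ℝ⟦X⟧) :
    weightedZ k (p + (-1, 0)) f = weightedZ k p (invStepFactor * f) := by
  rw [weightedZ_apply, weightedZ_apply, genZ, genZ, Prod.fst_add, Prod.snd_add, add_zero,
    Int.cast_add, Int.cast_neg, Int.cast_one, ← sub_eq_add_neg, genF_intCast_sub_one,
    map_mul ofRealSeries invStepFactor, map_mul ofRealSeries _ f]
  congr 1
  ring

lemma weightedZ_add_up (k : ℕ) (p : ℤ × ℤ) (f : ℝ⟦X⟧) :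
    weightedZ k (p + (0, 1)) f = weightedZ k p ((1 - (1 / 2 : ℝ) • X ^ 2) * f)
      + Complex.I * weightedZ k p (X * sqrtSeries (-1) * f) := by
  rw [weightedZ_apply, weightedZ_apply, weightedZ_apply, genZ, genZ, Prod.fst_add, Prod.snd_add,
    add_zero, Int.cast_add, Int.cast_one, genF_intCast_add_one, map_mul rotateSeries,
    rotateSeries_stepFactor, map_mul ofRealSeries _ f, map_mul ofRealSeries _ f,
    ← smul_eq_mul Complex.I, ← coeff_smul, ← map_add]
  congr 1
  algebra

lemma weightedZ_add_down (k : ℕ) (p : ℤ × ℤ) (f : ℝ⟦X⟧) :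
    weightedZ k (p + (0, -1)) f = weightedZ k p ((1 - (1 / 2 : ℝ) • X ^ 2) * f)
      - Complex.I * weightedZ k p (X * sqrtSeries (-1) * f) := by
  rw [weightedZ_apply, weightedZ_apply, weightedZ_apply, genZ, genZ, Prod.fst_add, Prod.snd_add,
    add_zero, Int.cast_add, Int.cast_neg, Int.cast_one, ← sub_eq_add_neg, genF_intCast_sub_one,
    map_mul rotateSeries, rotateSeries_invStepFactor, map_mul ofRealSeries _ f,
    map_mul ofRealSeries _ f, ← smul_eq_mul Complex.I, ← coeff_smul, ← map_sub]
  congr 1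
  algebra

lemma mean_norm_sq_weightedZ (k : ℕ) (p : ℤ × ℤ) (f : ℝ⟦X⟧) :
    (4 : ℝ)⁻¹ * ∑ e ∈ Sfin, ‖weightedZ k (p + e) f‖ ^ 2 =
      ‖weightedZ k p f‖ ^ 2 + 1 / 4 * ‖weightedZ k p (X ^ 2 * f)‖ ^ 2
        + 1 / 2 * ‖weightedZ k p (X * sqrtSeries 1 * f)‖ ^ 2
        + 1 / 2 * ‖weightedZ k p (X * sqrtSeries (-1) * f)‖ ^ 2 := by
  rw [sum_Sfin fun e => ‖weightedZ k (p + e) f‖ ^ 2, weightedZ_add_right, weightedZ_add_left,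
    weightedZ_add_up, weightedZ_add_down, stepFactor, invStepFactor, add_mul _ _ f, sub_mul _ _ f,
    add_mul _ _ f, sub_mul _ _ f, one_mul, smul_mul_assoc, map_add, map_sub, map_add, map_sub,
    map_smul]
  set z := weightedZ k p f
  set w := (1 / 2 : ℝ) • weightedZ k p (X ^ 2 * f) with hw
  have hw_norm : ‖w‖ ^ 2 = 1 / 4 * ‖weightedZ k p (X ^ 2 * f)‖ ^ 2 := by
    rw [hw, norm_smul, mul_pow]
    norm_num
  have hparallelogram (z w : ℂ) : ‖z + w‖ ^ 2 + ‖z - w‖ ^ 2 = 2 * (‖z‖ ^ 2 + ‖w‖ ^ 2) := by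
    simpa only [sq] using parallelogram_law_with_norm ℝ z w
  have hI (v : ℂ) : ‖Complex.I * v‖ = ‖v‖ := by rw [norm_mul, Complex.norm_I, one_mul]
  rw [add_assoc, hparallelogram, hparallelogram, hI]
  linarith [hparallelogram z w]

lemma Q_weightedZ (k n : ℕ) (f : ℝ⟦X⟧) :
    Q (fun p => weightedZ k p f) n = walkForm k n f f := by
  induction n generalizing f with
  | zero =>
    simp [Q, walkForm_zero, initialForm_apply, weightedZ_zero, sq]
  | succ n ih =>
    rw [Q_succ, walkForm_succ, LinearMap.add_apply, LinearMap.add_apply, walkGenerator_apply,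
      ← ih, ← ih, ← ih, ← ih]
    simp only [mean_norm_sq_weightedZ, sum_add_distrib, ← mul_sum, Q]
    ring

lemma Qk_eq_walkForm (k n : ℕ) : Qk k n = walkForm k n 1 1 := by
  simp only [← Q_weightedZ, weightedZ_one, Qk]

lemma a_eq_newtonForm (k j : ℕ) : a k j = newtonForm k (k - j) 1 1 := by
  let φ : Module.End ℝ (BilinForm ℝ ℝ⟦X⟧) →+ ℝ :=
    { toFun T := T (initialForm k) 1 1
      map_zero' := rfl
      map_add' _ _ := rfl }
  have hφ : Qk k = fun n => φ ((1 + walkGenerator) ^ n) := funext (Qk_eq_walkForm k)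
  rw [a, hφ, iterate_fwd_one_add_pow, pow_zero, mul_one]
  rfl

lemma a_mul_gbinom_nonneg (k n j : ℕ) : 0 ≤ a k j * gbinom n (k - j) := by
  rw [a_eq_newtonForm, gbinom_natCast]
  exact mul_nonneg ((isPosSemidef_newtonForm k _).isNonneg.nonneg 1) (Nat.cast_nonneg _)

lemma sum_mul_newtonForm_eq {k n : ℕ} (hkn : k ≤ n) (c : ℕ → ℝ) :
    ∑ m ∈ range (n + 1), c m * (n.choose m * newtonForm k m 1 1) =
      ∑ j ∈ range (k + 1), c (k - j) * (a k j * gbinom n (k - j)) := by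
  rw [← sum_subset (range_mono (Nat.succ_le_succ hkn)) fun m _ hm => ?_, ← sum_flip]
  · refine sum_congr rfl fun j _ => ?_
    rw [a_eq_newtonForm, gbinom_natCast, mul_comm (newtonForm _ _ _ _)]
  · rw [newtonForm_eq_zero (by simpa using hm), LinearMap.zero_apply, LinearMap.zero_apply,
      mul_zero, mul_zero]

lemma Qk_eq_sum {k n : ℕ} (hkn : k ≤ n) :
    Qk k n = ∑ j ∈ range (k + 1), a k j * gbinom n (k - j) := by
  simpa only [one_mul, Qk_eq_walkForm, walkForm_apply_eq_sum] using
    sum_mul_newtonForm_eq hkn fun _ => 1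

lemma sum_mul_a_mul_gbinom_eq {k n : ℕ} (hkn : k ≤ n + 1) :
    ∑ j ∈ range (k + 1), j * (a k j * gbinom ((n + 1 : ℕ) : ℝ) (k - j)) =
      k * walkForm k (n + 1) 1 1 - (n + 1) * walkGenerator (walkForm k n) 1 1 := by
  rw [← Qk_eq_walkForm, Qk_eq_sum hkn, succ_mul_walkGenerator_walkForm,
    sum_mul_newtonForm_eq hkn fun m => (m : ℝ), mul_sum, ← sum_sub_distrib]
  refine sum_congr rfl fun j hj => ?_
  rw [Nat.cast_sub (mem_range_succ_iff.mp hj)]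
  ring

lemma sum_mul_a_mul_gbinom_le {k n : ℕ} (hkn : 2 * k < n) :
    ∑ j ∈ range (k + 1), j * (a k j * gbinom n (k - j)) ≤ 40 * ((k : ℝ) ^ 2 / n) * Qk k n := by
  obtain ⟨n, rfl⟩ := Nat.exists_eq_add_one_of_ne_zero (by omega : n ≠ 0)
  rw [sum_mul_a_mul_gbinom_eq (by omega), Qk_eq_walkForm, Nat.cast_succ]
  exact mul_walkForm_succ_sub_walkGenerator_le hkn.le

end RandomWalk

section MarkovInequality

variable {ι K : Type*} [Field K] [LinearOrder K] [IsStrictOrderedRing K] {s : Finset ι}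
  {w x : ι → K}

lemma sum_le_two_mul_sum_filter_le (hw : ∀ i ∈ s, 0 ≤ w i) (hx : ∀ i ∈ s, 0 ≤ x i) {T : K}
    (hT : 0 < T) (hmean : ∑ i ∈ s, x i * w i ≤ T * ∑ i ∈ s, w i) :
    ∑ i ∈ s, w i ≤ 2 * ∑ i ∈ s with x i ≤ 2 * T, w i := by
  have htail : 2 * T * ∑ i ∈ s with ¬x i ≤ 2 * T, w i ≤ ∑ i ∈ s, x i * w i := by
    rw [mul_sum]
    refine (sum_le_sum fun i hi => ?_).trans
      (sum_le_sum_of_subset_of_nonneg (filter_subset (fun i => ¬x i ≤ 2 * T) s) fun i hi _ =>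
        mul_nonneg (hx i hi) (hw i hi))
    obtain ⟨his, hxi⟩ := mem_filter.mp hi
    exact mul_le_mul_of_nonneg_right (not_le.mp hxi).le (hw i his)
  have hhalf : 2 * ∑ i ∈ s with ¬x i ≤ 2 * T, w i ≤ ∑ i ∈ s, w i :=
    le_of_mul_le_mul_left (by linarith) hT
  linarith [sum_filter_add_sum_filter_not s (fun i => x i ≤ 2 * T) w]

end MarkovInequality

theorem pseudo_recursion :
    ∃ A > (5 : ℝ), ∃ B > (1 : ℝ), ∀ k n : ℕ, 2 * k < n →
      (∑ j ∈ (Finset.range (k + 1)).filter (fun j : ℕ => (j : ℝ) ≤ 5 * (k : ℝ) ^ 2 / n),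
          a k j * gbinom (n : ℝ) (k - j)) ≤ Qk k n ∧
      Qk k n ≤ B * ∑ j ∈ (Finset.range (k + 1)).filter (fun j : ℕ => (j : ℝ) ≤ A * (k : ℝ) ^ 2 / n),
          a k j * gbinom (n : ℝ) (k - j) := by
  refine ⟨80, by norm_num, 2, by norm_num, fun k n hkn => ⟨?_, ?_⟩⟩
  · rw [Qk_eq_sum (by omega)]
    exact sum_le_sum_of_subset_of_nonneg (filter_subset _ _) fun j _ _ => a_mul_gbinom_nonneg k n j
  · have hmean := sum_mul_a_mul_gbinom_le hkn
    rw [Qk_eq_sum (by omega)] at hmean ⊢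
    rcases Nat.eq_zero_or_pos k with rfl | hk
    · simpa using le_mul_of_one_le_left (a_mul_gbinom_nonneg 0 n 0) one_le_two
    · have hn : 0 < n := by omega
      have hmarkov := sum_le_two_mul_sum_filter_le (fun j _ => a_mul_gbinom_nonneg k n j)
        (fun j _ => Nat.cast_nonneg j) (by positivity) hmean
      rwa [← mul_assoc, ← mul_div_assoc, show (2 * 40 : ℝ) = 80 by norm_num] at hmarkov
end
end

section
/- Let n > 0 be a real number and define F(x) := 1 + n·x/((n − x)·(4n − x)) for real x with |x| < n. If y, z ∈ ℝ satisfy y + z ≥ 0, |y| < n and |z| < n, then F(y)·F(z) ≥ 1. -/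
open Finset

noncomputable section

/-!
Put `u = y / ((a - y) * (b - y))`, `v = z / ((a - z) * (b - z))` and `s = y + z`. Since
`(1 + k * u) * (1 + k * v) = 1 + k * (u + v + k * u * v)`, it suffices that `u + v + k * u * v` is
nonnegative. Its numerator is symmetric in `y` and `z`; written in terms of `s` and `(y - z) ^ 2`,
four times it is `s * ((2 * a - s) * (2 * b - s) + k * s) + (2 * a + 2 * b - k - s) * (y - z) ^ 2`,
where both terms are nonnegative. The theorem is the case `a = k = n`, `b = 4 * n`.
-/

theorem four_mul_cross_mul_add_eq {R : Type*} [CommRing R] (a b k y z : R) :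
    4 * (y * ((a - z) * (b - z)) + ((a - y) * (b - y)) * z + k * (y * z)) =
      (y + z) * ((2 * a - (y + z)) * (2 * b - (y + z)) + k * (y + z)) +
        (2 * a + 2 * b - k - (y + z)) * (y - z) ^ 2 := by
  ring

theorem cross_mul_add_nonneg {R : Type*} [CommRing R] [LinearOrder R] [IsStrictOrderedRing R]
    {a b k y z : R} (hab : a ≤ b) (hk : 0 ≤ k) (hkb : k ≤ 2 * b) (hs : 0 ≤ y + z)
    (hsa : y + z ≤ 2 * a) :
    0 ≤ y * ((a - z) * (b - z)) + ((a - y) * (b - y)) * z + k * (y * z) := by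
  have ha : 0 ≤ 2 * a - (y + z) := by linarith
  have hb : 0 ≤ 2 * b - (y + z) := by linarith
  have hc : 0 ≤ 2 * a + 2 * b - k - (y + z) := by linarith
  refine nonneg_of_mul_nonneg_right (a := 4) ?_ four_pos
  rw [four_mul_cross_mul_add_eq]
  exact add_nonneg (mul_nonneg hs (add_nonneg (mul_nonneg ha hb) (mul_nonneg hk hs)))
    (mul_nonneg hc (sq_nonneg _))

section Field

variable {K : Type*} [Field K] [LinearOrder K] [IsStrictOrderedRing K]

theorem div_add_div_add_mul_nonneg {a b k y z : K} (hab : a ≤ b) (hk : 0 ≤ k) (hkb : k ≤ 2 * b)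
    (hyz : 0 ≤ y + z) (hy : y < a) (hz : z < a) :
    0 ≤ y / ((a - y) * (b - y)) + z / ((a - z) * (b - z)) +
      k * (y / ((a - y) * (b - y)) * (z / ((a - z) * (b - z)))) := by
  have hDy : 0 < (a - y) * (b - y) :=
    mul_pos (sub_pos.mpr hy) (sub_pos.mpr (hy.trans_le hab))
  have hDz : 0 < (a - z) * (b - z) :=
    mul_pos (sub_pos.mpr hz) (sub_pos.mpr (hz.trans_le hab))
  rw [div_add_div _ _ hDy.ne' hDz.ne', div_mul_div_comm, mul_div_assoc', ← add_div]
  exact div_nonneg (cross_mul_add_nonneg hab hk hkb hyz (by linarith)) (mul_pos hDy hDz).le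

theorem F_product_ge_one_general {a b k y z : K} (hab : a ≤ b) (hk : 0 ≤ k) (hkb : k ≤ 2 * b)
    (hyz : 0 ≤ y + z) (hy : y < a) (hz : z < a) :
    1 ≤ (1 + k * y / ((a - y) * (b - y))) * (1 + k * z / ((a - z) * (b - z))) := by
  calc
    1 ≤ 1 + k * (y / ((a - y) * (b - y)) + z / ((a - z) * (b - z)) +
        k * (y / ((a - y) * (b - y)) * (z / ((a - z) * (b - z))))) :=
      le_add_of_nonneg_right
        (mul_nonneg hk (div_add_div_add_mul_nonneg hab hk hkb hyz hy hz))
    _ = (1 + k * y / ((a - y) * (b - y))) * (1 + k * z / ((a - z) * (b - z))) := by ring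

end Field

theorem F_product_ge_one (n : ℝ) (hn : 0 < n) (y z : ℝ)
    (hyz : 0 ≤ y + z) (hy : |y| < n) (hz : |z| < n) :
    1 ≤ (1 + n * y / ((n - y) * (4 * n - y))) * (1 + n * z / ((n - z) * (4 * n - z))) :=
  F_product_ge_one_general (by linarith) hn.le (by linarith) hyz (lt_of_abs_lt hy) (lt_of_abs_lt hz)
end
end

section
/- For every j ∈ ℕ and every x ∈ ℝ one has F_j(x)² ≤ x^{2j}/(j!)² + 1. -/
open Finset

noncomputable section

/-!
The roots of `F k` are `i - (k - 1) / 2` for `i < k`, which are symmetric about `0`. Pairing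
opposite roots gives `(k! * F k x) ^ 2 = ∏ i < k, (x ^ 2 - (i - (k - 1) / 2) ^ 2)`, which is at
most `x ^ (2 * k)` once `|x|` dominates every root. For smaller `|x|` the argument of the binomial
coefficient lies in `[-1, k]`, where its absolute value is at most `1`.
-/

section Products

variable {R : Type*} [CommRing R]

theorem sq_prod_range_add_eq_of_antisymm {n : ℕ} {a : ℕ → R}
    (ha : ∀ i < n, a (n - 1 - i) = -a i) (x : R) :
    (∏ i ∈ range n, (x + a i)) ^ 2 = ∏ i ∈ range n, (x ^ 2 - a i ^ 2) := by
  have reflect : ∏ i ∈ range n, (x + a i) = ∏ i ∈ range n, (x - a i) := by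
    rw [← prod_range_reflect]
    refine prod_congr rfl fun i hi ↦ ?_
    rw [ha i (mem_range.mp hi), sub_eq_add_neg]
  calc (∏ i ∈ range n, (x + a i)) ^ 2
      = (∏ i ∈ range n, (x + a i)) * ∏ i ∈ range n, (x - a i) := by rw [← reflect, sq]
    _ = ∏ i ∈ range n, (x ^ 2 - a i ^ 2) := by simp_rw [← prod_mul_distrib, sq_sub_sq]

variable [LinearOrder R] [IsStrictOrderedRing R]

theorem sq_prod_range_add_le_pow_of_antisymm {n : ℕ} {a : ℕ → R} {x : R}
    (ha : ∀ i < n, a (n - 1 - i) = -a i) (hx : ∀ i < n, |a i| ≤ |x|) :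
    (∏ i ∈ range n, (x + a i)) ^ 2 ≤ x ^ (2 * n) :=
  calc (∏ i ∈ range n, (x + a i)) ^ 2
      = ∏ i ∈ range n, (x ^ 2 - a i ^ 2) := sq_prod_range_add_eq_of_antisymm ha x
    _ ≤ ∏ _i ∈ range n, x ^ 2 :=
      prod_le_prod (fun i hi ↦ sub_nonneg.mpr (sq_le_sq.mpr (hx i (mem_range.mp hi))))
        fun i _ ↦ sub_le_self _ (sq_nonneg (a i))
    _ = x ^ (2 * n) := by rw [prod_const, card_range, pow_mul]

theorem abs_prod_range_sub_natCast_le_factorial {k : ℕ} {y : R} (hy : -1 ≤ y) (hyk : y ≤ k) :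
    |∏ i ∈ range k, (y - i)| ≤ (k.factorial : R) := by
  induction k generalizing y with
  | zero => simp
  | succ k ih =>
    rw [Nat.cast_succ] at hyk
    rw [Nat.factorial_succ, Nat.cast_mul, Nat.cast_succ]
    -- Split off whichever end factor leaves a product with argument in `[-1, k]`.
    rcases le_or_gt y k with hle | hlt
    · have last_le : |y - k| ≤ k + 1 := abs_le.mpr ⟨by linarith, by linarith⟩
      rw [prod_range_succ, abs_mul, mul_comm]
      exact mul_le_mul last_le (ih hy hle) (abs_nonneg _) (by positivity)
    · have first_le : |y| ≤ k + 1 := abs_le.mpr ⟨by linarith, hyk⟩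
      have shift : ∏ i ∈ range k, (y - (i + 1 : ℕ)) = ∏ i ∈ range k, (y - 1 - i) :=
        prod_congr rfl fun i _ ↦ by push_cast; ring
      rw [prod_range_succ', shift, Nat.cast_zero, sub_zero, abs_mul, mul_comm]
      exact mul_le_mul first_le (ih (by linarith) (by linarith)) (abs_nonneg _) (by positivity)

end Products

theorem abs_gbinom_le_one {k : ℕ} {y : ℝ} (hy : -1 ≤ y) (hyk : y ≤ k) : |gbinom y k| ≤ 1 := by
  rw [gbinom, abs_div, Nat.abs_cast]
  exact div_le_one_of_le₀ (abs_prod_range_sub_natCast_le_factorial hy hyk) (Nat.cast_nonneg _)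

theorem F_sq_le_one {k : ℕ} {x : ℝ} (hx : |x| ≤ ((k : ℝ) + 1) / 2) : F k x ^ 2 ≤ 1 := by
  obtain ⟨hlower, hupper⟩ := abs_le.mp hx
  exact (sq_le_one_iff_abs_le_one _).mpr (abs_gbinom_le_one (by linarith) (by linarith))

theorem F_sq_le_pow_div_factorial_sq {k : ℕ} {x : ℝ} (hx : ((k : ℝ) - 1) / 2 ≤ |x|) :
    F k x ^ 2 ≤ x ^ (2 * k) / (k.factorial : ℝ) ^ 2 := by
  have offset_antisymm : ∀ i < k,
      ((k : ℝ) - 1) / 2 - (k - 1 - i : ℕ) = -(((k : ℝ) - 1) / 2 - i) := by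
    intro i hi
    rw [Nat.sub_sub, Nat.cast_sub (by lia)]
    push_cast
    ring
  have offset_le : ∀ i < k, |((k : ℝ) - 1) / 2 - i| ≤ |x| := by
    intro i hi
    have hik : (i : ℝ) + 1 ≤ k := mod_cast hi
    exact (abs_le.mpr ⟨by linarith, by linarith⟩).trans hx
  simp_rw [F, gbinom, div_pow, add_sub_assoc]
  gcongr
  exact sq_prod_range_add_le_pow_of_antisymm offset_antisymm offset_le

theorem F_bound (j : ℕ) (x : ℝ) :
    F j x ^ 2 ≤ x ^ (2 * j) / (Nat.factorial j : ℝ) ^ 2 + 1 := by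
  rcases le_total |x| (((j : ℝ) + 1) / 2) with hsmall | hlarge
  · have hpow : 0 ≤ x ^ (2 * j) := (even_two_mul j).pow_nonneg x
    exact (F_sq_le_one hsmall).trans (le_add_of_nonneg_left (by positivity))
  · have roots_le : ((j : ℝ) - 1) / 2 ≤ |x| := by linarith
    exact (F_sq_le_pow_div_factorial_sq roots_le).trans (le_add_of_nonneg_right zero_le_one)
end
end

section
/- For every k ∈ ℕ and all x, y ∈ ℝ one has |Z̃_k(x,y)|² ≤ 3·32^k·Σ_{l=0}^{k} (x^{2l} + y^{2l})/(4^l·(l!)²). -/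
open Finset

noncomputable section

/-- `Z̃_k(x,y) = 2^k Z_k(x/2, y/2)`. -/
noncomputable def Ztilde (k : ℕ) (x y : ℝ) : ℂ := 2 ^ k * Z k (x / 2) (y / 2)

/-!
The numbers `G_n(x) = 2 ^ n * F n (x / 2)` satisfy
`G_{n+2}(x) = G_n(x) (x² - (n + 1)²) / ((n + 1) (n + 2))`, so they are dominated by the Taylor
polynomials of `exp` at `|x|`, i.e. by the coefficients of `exp (|x| t) / (1 - t)`. Since
`∑ Z̃_n(x, y) tⁿ = (∑ G_n(x) tⁿ) (∑ G_n(y) (i t)ⁿ)`, the modulus of `Z̃_n(x, y)` is at most the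
`n`-th coefficient of `exp ((|x| + |y|) t) / (1 - t)²`, hence of
`exp ((|x| + |y|) t) / (1 - 2 t)`. The theorem follows by Cauchy–Schwarz with the weights
`4 ^ m * 2 ^ (n - m)`, whose squares sum to at most `4 / 3 * 16 ^ n`.
-/

section ExpPartialSum

variable {K : Type*} [Field K]

/-- The Taylor polynomial of degree `n` of the exponential function at `0`, evaluated at `a`. It
serves to majorize `2 ^ n * F n (x / 2)`. -/
def expPartialSum (n : ℕ) (a : K) : K :=
  ∑ p ∈ range (n + 1), a ^ p / (p.factorial : K)

@[simp]
lemma expPartialSum_zero (a : K) : expPartialSum 0 a = 1 := by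
  simp [expPartialSum]

@[simp]
lemma expPartialSum_one (a : K) : expPartialSum 1 a = 1 + a := by
  simp [expPartialSum, sum_range_succ]

section Ordered

variable [LinearOrder K] [IsStrictOrderedRing K] {a : K}

lemma expPartialSum_nonneg (n : ℕ) (ha : 0 ≤ a) : 0 ≤ expPartialSum n a :=
  sum_nonneg fun _ _ ↦ by positivity

lemma expPartialSum_mono (ha : 0 ≤ a) : Monotone fun n ↦ expPartialSum n a := fun m n hmn ↦
  sum_le_sum_of_subset_of_nonneg (range_mono (by lia)) fun _ _ _ ↦ by positivity

lemma expPartialSum_mul_div_le (n : ℕ) (ha : 0 ≤ a) :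
    expPartialSum n a * (a / (n + 1)) ≤ expPartialSum (n + 1) a := by
  have term_le : ∀ p ∈ range (n + 1),
      a ^ p / (p.factorial : K) * (a / (n + 1)) ≤ a ^ (p + 1) / ((p + 1).factorial : K) := by
    intro p hp
    have hpn : (p : K) ≤ n := by exact_mod_cast mem_range_succ_iff.mp hp
    rw [div_mul_div_comm, ← pow_succ, Nat.factorial_succ, Nat.cast_mul, Nat.cast_succ,
      mul_comm (p + 1 : K)]
    gcongr
  calc expPartialSum n a * (a / (n + 1))
      = ∑ p ∈ range (n + 1), a ^ p / (p.factorial : K) * (a / (n + 1)) := sum_mul ..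
    _ ≤ ∑ p ∈ range (n + 1), a ^ (p + 1) / ((p + 1).factorial : K) := sum_le_sum term_le
    _ ≤ expPartialSum (n + 1) a := by
        rw [expPartialSum, sum_range_succ' _ (n + 1)]
        exact le_add_of_nonneg_right (by positivity)

lemma expPartialSum_mul_sq_div_le (n : ℕ) (ha : 0 ≤ a) :
    expPartialSum n a * (a ^ 2 / ((n + 1) * (n + 2))) ≤ expPartialSum (n + 2) a :=
  calc expPartialSum n a * (a ^ 2 / ((n + 1) * (n + 2)))
      = expPartialSum n a * (a / (n + 1)) * (a / ((n + 1 : ℕ) + 1)) := by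
        push_cast
        rw [add_assoc, one_add_one_eq_two, mul_assoc, div_mul_div_comm, sq]
    _ ≤ expPartialSum (n + 1) a * (a / ((n + 1 : ℕ) + 1)) := by
        gcongr
        exact expPartialSum_mul_div_le n ha
    _ ≤ expPartialSum (n + 2) a := expPartialSum_mul_div_le (n + 1) ha

end Ordered

section PowerSeries

open PowerSeries

variable [CharZero K]

lemma mk_expPartialSum (a : K) :
    PowerSeries.mk (fun n ↦ expPartialSum n a) = rescale a (exp K) * PowerSeries.mk 1 := by
  ext n
  rw [coeff_mul, coeff_mk, Nat.sum_antidiagonal_eq_sum_range_succ_mk]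
  simp [expPartialSum, coeff_rescale, coeff_exp, div_eq_mul_inv]

lemma sum_antidiagonal_expPartialSum_mul_expPartialSum (n : ℕ) (a b : K) :
    ∑ p ∈ antidiagonal n, expPartialSum p.1 a * expPartialSum p.2 b =
      ∑ p ∈ antidiagonal n, (a + b) ^ p.1 / (p.1.factorial : K) * (p.2 + 1) := by
  have key :
      PowerSeries.mk (fun n ↦ expPartialSum n a) * PowerSeries.mk (fun n ↦ expPartialSum n b) =
      rescale (a + b) (exp K) * PowerSeries.mk 1 ^ (1 + 1) := by
    rw [mk_expPartialSum, mk_expPartialSum, ← exp_mul_exp_eq_exp_add]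
    ring
  rw [mk_one_pow_eq_mk_choose_add] at key
  simpa [coeff_mul, coeff_rescale, coeff_exp, div_eq_mul_inv, add_comm 1] using
    congrArg (coeff n) key

end PowerSeries

end ExpPartialSum

section OrderedField

variable {K : Type*} [Field K] [LinearOrder K] [IsStrictOrderedRing K]

lemma abs_sq_sub_sq_div_le_max (n : ℕ) (x : K) :
    |(x ^ 2 - (n + 1) ^ 2) / ((n + 1) * (n + 2))| ≤ max (|x| ^ 2 / ((n + 1) * (n + 2))) 1 := by
  have hpos : (0 : K) < (n + 1) * (n + 2) := by positivity
  have hsq : ((n : K) + 1) ^ 2 ≤ (n + 1) * (n + 2) := by nlinarith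
  calc |(x ^ 2 - (n + 1 : K) ^ 2) / ((n + 1) * (n + 2))|
      = |x ^ 2 - (n + 1 : K) ^ 2| / ((n + 1) * (n + 2)) := by rw [abs_div, abs_of_pos hpos]
    _ ≤ max (x ^ 2) ((n + 1) * (n + 2)) / ((n + 1) * (n + 2)) := by
        gcongr
        exact abs_sub_le_iff.mpr ⟨le_max_of_le_left (sub_le_self _ (sq_nonneg _)),
          le_max_of_le_right ((sub_le_self _ (sq_nonneg x)).trans hsq)⟩
    _ = max (|x| ^ 2 / ((n + 1) * (n + 2))) 1 := by
        rw [← max_div_div_right hpos.le, div_self hpos.ne', sq_abs]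

lemma sum_antidiagonal_four_pow_mul_two_pow_sq_le (k : ℕ) :
    ∑ p ∈ antidiagonal k, ((4 : K) ^ p.1 * 2 ^ p.2) ^ 2 ≤ 4 / 3 * 16 ^ k := by
  have geom : (∑ p ∈ antidiagonal k, (16 : K) ^ p.1 * 4 ^ p.2) * (16 - 4) =
      16 ^ (k + 1) - 4 ^ (k + 1) := by
    rw [Nat.sum_antidiagonal_eq_sum_range_succ fun m j ↦ (16 : K) ^ m * 4 ^ j]
    exact geom_sum₂_mul 16 4 (k + 1)
  have sq_eq : ∀ p : ℕ × ℕ, ((4 : K) ^ p.1 * 2 ^ p.2) ^ 2 = 16 ^ p.1 * 4 ^ p.2 := fun p ↦ by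
    rw [mul_pow, pow_right_comm, pow_right_comm 2]
    norm_num
  have four_pow_pos : (0 : K) < 4 ^ (k + 1) := by positivity
  simp only [sq_eq]
  linarith [pow_succ (16 : K) k]

lemma abs_add_abs_pow_two_mul_le (m : ℕ) (x y : K) :
    (|x| + |y|) ^ (2 * m) ≤ 4 ^ m * (x ^ (2 * m) + y ^ (2 * m)) :=
  calc (|x| + |y|) ^ (2 * m)
      ≤ 2 ^ (2 * m - 1) * (|x| ^ (2 * m) + |y| ^ (2 * m)) := (even_two_mul m).add_pow_le
    _ ≤ 2 ^ (2 * m) * (|x| ^ (2 * m) + |y| ^ (2 * m)) := by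
        gcongr
        · exact one_le_two
        · exact Nat.sub_le _ _
    _ = 4 ^ m * (x ^ (2 * m) + y ^ (2 * m)) := by
        rw [(even_two_mul m).pow_abs, (even_two_mul m).pow_abs, pow_mul 2]
        norm_num

lemma sq_abs_add_abs_pow_div_le (m : ℕ) (x y : K) :
    ((|x| + |y|) ^ m / (4 ^ m * (m.factorial : K))) ^ 2 ≤
      (x ^ (2 * m) + y ^ (2 * m)) / (4 ^ m * (m.factorial : K) ^ 2) :=
  calc ((|x| + |y|) ^ m / (4 ^ m * (m.factorial : K))) ^ 2
      = (|x| + |y|) ^ (2 * m) / (4 ^ m * (4 ^ m * (m.factorial : K) ^ 2)) := by ring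
    _ ≤ 4 ^ m * (x ^ (2 * m) + y ^ (2 * m)) / (4 ^ m * (4 ^ m * (m.factorial : K) ^ 2)) := by
        gcongr
        exact abs_add_abs_pow_two_mul_le m x y
    _ = (x ^ (2 * m) + y ^ (2 * m)) / (4 ^ m * (m.factorial : K) ^ 2) :=
        mul_div_mul_left _ _ (by positivity)

end OrderedField

lemma F_add_two (n : ℕ) (x : ℝ) :
    F (n + 2) x = F n x * ((x ^ 2 - ((n + 1) / 2) ^ 2) / ((n + 1) * (n + 2))) := by
  have shift : ∏ j ∈ range n, (x + (((n + 2 : ℕ) : ℝ) - 1) / 2 - ((j + 1 : ℕ) : ℝ)) =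
      ∏ j ∈ range n, (x + ((n : ℝ) - 1) / 2 - j) :=
    prod_congr rfl fun j _ ↦ by push_cast; ring
  unfold F gbinom
  rw [prod_range_succ, prod_range_succ', shift, Nat.factorial_succ, Nat.factorial_succ]
  push_cast
  field_simp
  ring

lemma two_pow_mul_F_add_two_half (n : ℕ) (x : ℝ) :
    2 ^ (n + 2) * F (n + 2) (x / 2) =
      2 ^ n * F n (x / 2) * ((x ^ 2 - (n + 1) ^ 2) / ((n + 1) * (n + 2))) := by
  rw [F_add_two]
  ring

lemma abs_two_pow_mul_F_half_le (x : ℝ) (n : ℕ) :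
    |2 ^ n * F n (x / 2)| ≤ expPartialSum n |x| := by
  induction n using Nat.twoStepInduction with
  | zero => simp [F, gbinom]
  | one =>
    have h : (2 : ℝ) ^ 1 * F 1 (x / 2) = x := by
      simp [F, gbinom, mul_div_cancel₀]
    rw [h, expPartialSum_one]
    exact le_add_of_nonneg_left zero_le_one
  | more n ih _ =>
    have hS := expPartialSum_nonneg n (abs_nonneg x)
    calc |2 ^ (n + 2) * F (n + 2) (x / 2)|
        = |2 ^ n * F n (x / 2)| * |(x ^ 2 - (n + 1) ^ 2) / ((n + 1) * (n + 2))| := by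
          rw [two_pow_mul_F_add_two_half, abs_mul]
      _ ≤ expPartialSum n |x| * max (|x| ^ 2 / ((n + 1) * (n + 2))) 1 := by
          gcongr
          exact abs_sq_sub_sq_div_le_max n x
      _ ≤ expPartialSum (n + 2) |x| := by
          rw [mul_max_of_nonneg _ _ hS, mul_one]
          exact max_le (expPartialSum_mul_sq_div_le n (abs_nonneg x))
            (expPartialSum_mono (abs_nonneg x) (Nat.le_add_right n 2))

lemma Ztilde_eq_sum_antidiagonal (k : ℕ) (x y : ℝ) :
    Ztilde k x y = ∑ p ∈ antidiagonal k, Complex.I ^ p.1 *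
      ((2 ^ p.2 * F p.2 (x / 2) : ℝ) : ℂ) * ((2 ^ p.1 * F p.1 (y / 2) : ℝ) : ℂ) := by
  rw [Ztilde, Z, ← Nat.sum_antidiagonal_eq_sum_range_succ
    (fun l m ↦ Complex.I ^ l * (F m (x / 2) : ℂ) * (F l (y / 2) : ℂ)), mul_sum]
  refine sum_congr rfl fun p hp ↦ ?_
  rw [← mem_antidiagonal.mp hp]
  push_cast
  ring

lemma norm_Ztilde_le_sum_expPartialSum (k : ℕ) (x y : ℝ) :
    ‖Ztilde k x y‖ ≤
      ∑ p ∈ antidiagonal k, expPartialSum p.1 |y| * expPartialSum p.2 |x| := by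
  rw [Ztilde_eq_sum_antidiagonal]
  refine norm_sum_le_of_le _ fun p _ ↦ ?_
  rw [norm_mul, norm_mul, norm_pow, Complex.norm_I, one_pow, one_mul, Complex.norm_real,
    Complex.norm_real, Real.norm_eq_abs, Real.norm_eq_abs, mul_comm]
  exact mul_le_mul (abs_two_pow_mul_F_half_le y p.1) (abs_two_pow_mul_F_half_le x p.2)
    (abs_nonneg _) (expPartialSum_nonneg _ (abs_nonneg y))

lemma norm_Ztilde_le_sum_two_pow (k : ℕ) (x y : ℝ) :
    ‖Ztilde k x y‖ ≤
      ∑ p ∈ antidiagonal k, (|x| + |y|) ^ p.1 / (p.1.factorial : ℝ) * 2 ^ p.2 :=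
  calc ‖Ztilde k x y‖
      ≤ ∑ p ∈ antidiagonal k, (|x| + |y|) ^ p.1 / (p.1.factorial : ℝ) * (p.2 + 1) := by
        rw [add_comm |x|, ← sum_antidiagonal_expPartialSum_mul_expPartialSum]
        exact norm_Ztilde_le_sum_expPartialSum k x y
    _ ≤ ∑ p ∈ antidiagonal k, (|x| + |y|) ^ p.1 / (p.1.factorial : ℝ) * 2 ^ p.2 := by
        gcongr with p
        exact_mod_cast Nat.succ_le_of_lt p.2.lt_two_pow_self

theorem Ztilde_bound_general (k : ℕ) (x y : ℝ) :
    ‖Ztilde k x y‖ ^ 2 ≤ 4 / 3 * 16 ^ k *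
      ∑ l ∈ range (k + 1), (x ^ (2 * l) + y ^ (2 * l)) / (4 ^ l * (l.factorial : ℝ) ^ 2) := by
  let u (m : ℕ) : ℝ := (|x| + |y|) ^ m / (4 ^ m * (m.factorial : ℝ))
  have norm_le : ‖Ztilde k x y‖ ≤ ∑ p ∈ antidiagonal k, 4 ^ p.1 * 2 ^ p.2 * u p.1 := by
    refine (norm_Ztilde_le_sum_two_pow k x y).trans_eq (sum_congr rfl fun p _ ↦ ?_)
    simp only [u]
    field_simp
  calc ‖Ztilde k x y‖ ^ 2
      ≤ (∑ p ∈ antidiagonal k, 4 ^ p.1 * 2 ^ p.2 * u p.1) ^ 2 := by gcongr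
    _ ≤ (∑ p ∈ antidiagonal k, (4 ^ p.1 * 2 ^ p.2) ^ 2) * ∑ p ∈ antidiagonal k, u p.1 ^ 2 :=
        sum_mul_sq_le_sq_mul_sq ..
    _ = (∑ p ∈ antidiagonal k, (4 ^ p.1 * 2 ^ p.2) ^ 2) * ∑ l ∈ range (k + 1), u l ^ 2 := by
        rw [Nat.sum_antidiagonal_eq_sum_range_succ fun l _ ↦ u l ^ 2]
    _ ≤ _ := by
        gcongr with l
        · exact sum_antidiagonal_four_pow_mul_two_pow_sq_le k
        · exact sq_abs_add_abs_pow_div_le l x y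

theorem Ztilde_bound (k : ℕ) (x y : ℝ) :
    ‖Ztilde k x y‖ ^ 2 ≤ 3 * 32 ^ k *
      ∑ l ∈ Finset.range (k + 1), (x ^ (2 * l) + y ^ (2 * l)) / (4 ^ l * (Nat.factorial l : ℝ) ^ 2) := by
  refine (Ztilde_bound_general k x y).trans (mul_le_mul_of_nonneg_right ?_ ?_)
  · gcongr <;> norm_num
  · exact sum_nonneg fun l _ ↦ div_nonneg (add_nonneg ((even_two_mul l).pow_nonneg x)
      ((even_two_mul l).pow_nonneg y)) (by positivity)
end
end

section
/- For all k, n ∈ ℕ, the 2k-th moment of the first coordinate of the simple random walk on ℤ² at time n satisfies 4^{-n}·Σ_{(s_1,…,s_n)∈S^n} (π₁(s_1+⋯+s_n))^{2k} ≤ ((2k)!/(4^k·k!))·n^k, where π₁ : ℤ² → ℤ is the projection onto the first coordinate. -/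
open Finset

noncomputable section

/-!
One coordinate of a single step has vanishing odd moments, and its even moments are at most those
of a centred Gaussian of variance `1 / 2`. Both properties survive adding independent variables,
with variances adding up: in the binomial expansion of the even moments of a sum only even exponents
contribute, and with Gaussian moments in their place the expansion is the exact formula for the sum
of two independent Gaussians.
-/

open scoped BigOperators

variable {α β R M : Type*}

/-- The moment of order `2 * k` of a centred Gaussian of variance `v`. -/
def gaussianEvenMoment (v : ℝ) (k : ℕ) : ℝ :=
  ((2 * k).factorial : ℝ) / (2 ^ k * k.factorial) * v ^ k

lemma gaussianEvenMoment_zero_right (v : ℝ) : gaussianEvenMoment v 0 = 1 := by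
  simp [gaussianEvenMoment]

lemma gaussianEvenMoment_succ (v : ℝ) (k : ℕ) :
    gaussianEvenMoment v (k + 1) = (2 * k + 1) * v * gaussianEvenMoment v k := by
  simp only [gaussianEvenMoment, mul_add_one, Nat.factorial_succ]
  push_cast
  field_simp
  ring

lemma gaussianEvenMoment_mul_half (t : ℝ) (k : ℕ) :
    gaussianEvenMoment (t * (1 / 2)) k =
      ((2 * k).factorial : ℝ) / (4 ^ k * k.factorial) * t ^ k := by
  rw [gaussianEvenMoment, show (4 : ℝ) = 2 * 2 by norm_num, mul_pow, mul_pow, one_div, inv_pow]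
  field_simp

lemma choose_mul_gaussianEvenMoment_mul_gaussianEvenMoment (v w : ℝ) (i j : ℕ) :
    ((2 * i + 2 * j).choose (2 * i) : ℝ) * (gaussianEvenMoment v i * gaussianEvenMoment w j) =
      ((2 * (i + j)).factorial : ℝ) / (2 ^ (i + j) * (i + j).factorial) *
        ((i + j).choose i * (v ^ i * w ^ j)) := by
  rw [Nat.cast_add_choose, Nat.cast_add_choose, ← mul_add]
  unfold gaussianEvenMoment
  field_simp
  ring

lemma sum_antidiagonal_gaussianEvenMoment (v w : ℝ) (k : ℕ) :
    ∑ q ∈ antidiagonal k, ((2 * k).choose (2 * q.1) : ℝ) *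
        (gaussianEvenMoment v q.1 * gaussianEvenMoment w q.2) =
      gaussianEvenMoment (v + w) k := by
  rw [gaussianEvenMoment, Commute.add_pow' (.all v w), mul_sum]
  refine sum_congr rfl fun q hq => ?_
  obtain rfl := HasAntidiagonal.mem_antidiagonal.1 hq
  rw [nsmul_eq_mul, ← choose_mul_gaussianEvenMoment_mul_gaussianEvenMoment, mul_add]

lemma sum_antidiagonal_two_mul_of_odd_eq_zero [AddCommMonoid M] {f : ℕ × ℕ → M}
    (hf : ∀ q, Odd q.1 → f q = 0) (k : ℕ) :
    ∑ q ∈ antidiagonal (2 * k), f q = ∑ q ∈ antidiagonal k, f (2 * q.1, 2 * q.2) := by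
  symm
  refine sum_of_injOn (fun q => (2 * q.1, 2 * q.2)) ?_ ?_ ?_ fun _ _ => rfl
  · rintro ⟨i, j⟩ - ⟨i', j'⟩ - h
    simpa using h
  · rintro ⟨i, j⟩ h
    simp only [mem_coe, HasAntidiagonal.mem_antidiagonal] at h ⊢
    lia
  · rintro ⟨i, j⟩ hij h_not_double
    refine hf _ (Nat.not_even_iff_odd.1 fun h_even => h_not_double ?_)
    obtain ⟨a, rfl⟩ := even_iff_two_dvd.1 h_even
    have h_sum : 2 * a + j = 2 * k := HasAntidiagonal.mem_antidiagonal.1 hij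
    exact ⟨(a, k - a), HasAntidiagonal.mem_antidiagonal.2 (by lia), Prod.ext rfl (by lia)⟩

lemma expect_product_add_pow [Semifield R] [CharZero R] (S : Finset α) (T : Finset β)
    (X : α → R) (Y : β → R) (m : ℕ) :
    𝔼 p ∈ S ×ˢ T, (X p.1 + Y p.2) ^ m =
      ∑ q ∈ antidiagonal m, (m.choose q.1 : R) * ((𝔼 x ∈ S, X x ^ q.1) * 𝔼 y ∈ T, Y y ^ q.2) := by
  simp only [fun p : α × β => (Commute.all (X p.1) (Y p.2)).add_pow' m, nsmul_eq_mul,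
    expect_sum_comm, ← mul_expect]
  exact sum_congr rfl fun q _ => by rw [expect_product, expect_mul_expect]

lemma expect_pow_two_mul_nonneg [Field R] [LinearOrder R] [IsStrictOrderedRing R]
    (S : Finset α) (X : α → R) (k : ℕ) :
    0 ≤ 𝔼 x ∈ S, X x ^ (2 * k) :=
  expect_nonneg fun x _ => (even_two_mul k).pow_nonneg (X x)

lemma expect_piFinset_succ [AddCommMonoid M] [Module ℚ≥0 M] {n : ℕ} {α : Fin (n + 1) → Type*}
    (S : ∀ i, Finset (α i)) (f : (∀ i, α i) → M) :
    𝔼 s ∈ Fintype.piFinset S, f s =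
      𝔼 p ∈ S 0 ×ˢ Fintype.piFinset (fun i : Fin n => S i.succ), f (Fin.cons p.1 p.2) :=
  expect_equiv (Fin.consEquiv α).symm
    (by simp [Fin.consEquiv, Fin.forall_fin_succ, Fin.tail]) (by simp [Fin.consEquiv])

/-- A random variable `X`, uniformly distributed over the finite set `S`, has vanishing odd moments,
and its even moments are at most those of a centred Gaussian of variance `v`. -/
structure HasGaussianDominatedMoments (S : Finset α) (X : α → ℝ) (v : ℝ) : Prop where
  odd_eq_zero {m : ℕ} (hm : Odd m) : 𝔼 x ∈ S, X x ^ m = 0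
  even_le (k : ℕ) : 𝔼 x ∈ S, X x ^ (2 * k) ≤ gaussianEvenMoment v k

namespace HasGaussianDominatedMoments

variable {S : Finset α} {T : Finset β} {X : α → ℝ} {Y : β → ℝ} {v w : ℝ}

lemma product_add_odd_eq_zero (hX : HasGaussianDominatedMoments S X v)
    (hY : HasGaussianDominatedMoments T Y w) {m : ℕ} (hm : Odd m) :
    𝔼 p ∈ S ×ˢ T, (X p.1 + Y p.2) ^ m = 0 := by
  rw [expect_product_add_pow]
  refine sum_eq_zero fun q hq => ?_
  obtain rfl := HasAntidiagonal.mem_antidiagonal.1 hq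
  rcases Nat.even_or_odd q.1 with h | h
  · rw [hY.odd_eq_zero ((Nat.odd_add'.1 hm).2 h), mul_zero, mul_zero]
  · rw [hX.odd_eq_zero h, zero_mul, mul_zero]

lemma product_add_even_le (hX : HasGaussianDominatedMoments S X v)
    (hY : HasGaussianDominatedMoments T Y w) (k : ℕ) :
    𝔼 p ∈ S ×ˢ T, (X p.1 + Y p.2) ^ (2 * k) ≤ gaussianEvenMoment (v + w) k := by
  calc 𝔼 p ∈ S ×ˢ T, (X p.1 + Y p.2) ^ (2 * k)
    _ = ∑ q ∈ antidiagonal k, ((2 * k).choose (2 * q.1) : ℝ) *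
          ((𝔼 x ∈ S, X x ^ (2 * q.1)) * 𝔼 y ∈ T, Y y ^ (2 * q.2)) := by
      rw [expect_product_add_pow, sum_antidiagonal_two_mul_of_odd_eq_zero]
      intro q hq
      rw [hX.odd_eq_zero hq, zero_mul, mul_zero]
    _ ≤ ∑ q ∈ antidiagonal k, ((2 * k).choose (2 * q.1) : ℝ) *
          (gaussianEvenMoment v q.1 * gaussianEvenMoment w q.2) := by
      gcongr with q
      · exact expect_pow_two_mul_nonneg T Y q.2
      · exact (expect_pow_two_mul_nonneg S X q.1).trans (hX.even_le q.1)
      · exact hX.even_le q.1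
      · exact hY.even_le q.2
    _ = gaussianEvenMoment (v + w) k := sum_antidiagonal_gaussianEvenMoment v w k

lemma product_add (hX : HasGaussianDominatedMoments S X v)
    (hY : HasGaussianDominatedMoments T Y w) :
    HasGaussianDominatedMoments (S ×ˢ T) (fun p => X p.1 + Y p.2) (v + w) :=
  ⟨hX.product_add_odd_eq_zero hY, hX.product_add_even_le hY⟩

lemma zero (S : Finset α) : HasGaussianDominatedMoments S (fun _ => 0) 0 where
  odd_eq_zero hm := by simp [hm.pos.ne']
  even_le
    | 0 => by
      rw [gaussianEvenMoment_zero_right]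
      obtain rfl | hS := S.eq_empty_or_nonempty
      · simp
      · exact expect_le hS (by simp)
    | k + 1 => by simp [gaussianEvenMoment]

lemma piFinset_sum {n : ℕ} {α : Fin n → Type*} {S : ∀ i, Finset (α i)} {X : ∀ i, α i → ℝ}
    {v : Fin n → ℝ} (h : ∀ i, HasGaussianDominatedMoments (S i) (X i) (v i)) :
    HasGaussianDominatedMoments (Fintype.piFinset S) (fun s => ∑ i, X i (s i)) (∑ i, v i) := by
  induction n with
  | zero => simpa using zero (Fintype.piFinset S)
  | succ n ih =>
    have h_cons := (h 0).product_add (ih fun i => h i.succ)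
    rw [Fin.sum_univ_succ]
    constructor
    · intro m hm
      simpa [expect_piFinset_succ, Fin.sum_univ_succ] using h_cons.odd_eq_zero hm
    · intro k
      simpa [expect_piFinset_succ, Fin.sum_univ_succ] using h_cons.even_le k

end HasGaussianDominatedMoments

lemma card_Sfin : #Sfin = 4 := rfl

lemma expect_Sfin (f : ℤ × ℤ → ℝ) :
    𝔼 x ∈ Sfin, f x = (f (1, 0) + f (-1, 0) + f (0, 1) + f (0, -1)) / 4 := by
  simp [Sfin, expect_eq_sum_div_card, add_assoc]

lemma half_le_gaussianEvenMoment_half_succ (k : ℕ) :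
    1 / 2 ≤ gaussianEvenMoment (1 / 2) (k + 1) := by
  induction k with
  | zero => norm_num [gaussianEvenMoment_succ, gaussianEvenMoment_zero_right]
  | succ k ih =>
    rw [gaussianEvenMoment_succ]
    refine ih.trans (le_mul_of_one_le_left (by linarith) ?_)
    push_cast
    linarith [k.cast_nonneg (α := ℝ)]

lemma hasGaussianDominatedMoments_fst_Sfin :
    HasGaussianDominatedMoments Sfin (fun x => (x.1 : ℝ)) (1 / 2) where
  odd_eq_zero hm := by simp [expect_Sfin, hm.neg_pow, hm.pos.ne']
  even_le
    | 0 => by norm_num [expect_Sfin, gaussianEvenMoment_zero_right]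
    | k + 1 => by
      refine le_of_eq_of_le ?_ (half_le_gaussianEvenMoment_half_succ k)
      norm_num [expect_Sfin, (even_two_mul (k + 1)).neg_pow]

theorem rw_moment_bound_general [AddCommMonoid α] (φ : α →+ ℝ) {S : Finset α} {v : ℝ}
    (h : HasGaussianDominatedMoments S φ v) (k n : ℕ) :
    (#S : ℝ)⁻¹ ^ n * ∑ s ∈ Fintype.piFinset (fun _ : Fin n => S), φ (∑ i, s i) ^ (2 * k) ≤
      gaussianEvenMoment (n * v) k := by
  simpa [expect_eq_sum_div_card, div_eq_inv_mul] using
    (HasGaussianDominatedMoments.piFinset_sum fun _ : Fin n => h).even_le k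

theorem rw_moment_bound (k n : ℕ) :
    (4 : ℝ)⁻¹ ^ n * ∑ s ∈ Fintype.piFinset (fun _ : Fin n => Sfin), ((∑ i, s i).1 : ℝ) ^ (2 * k)
      ≤ ((2 * k).factorial : ℝ) / (4 ^ k * Nat.factorial k) * (n : ℝ) ^ k := by
  simpa only [card_Sfin, Nat.cast_ofNat, gaussianEvenMoment_mul_half, AddMonoidHom.comp_apply,
    AddMonoidHom.coe_fst, Int.coe_castAddHom] using
    rw_moment_bound_general ((Int.castAddHom ℝ).comp (.fst ℤ ℤ))
      hasGaussianDominatedMoments_fst_Sfin k n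
end
end
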